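/- arXiv:1810.09046 — 3 statements merged into one kernel-verified Lean document; each statement's English description precedes it below -/
import Mathlib

section
/- Source-free Maxwell fields track null geodesics (flat-space version of the claim that electromagnetic fields track all null geodesics): let 𝒞 be the collection of stress-energy tensors T[F] of all smooth fields F : ℝ⁴ → Matrix (Fin 4) (Fin 4) ℝ with antisymmetric values solving the source-free Maxwell equations. Then for every p ∈ ℝ⁴ and every future null u ∈ ℝ⁴, the collection 𝒞 tracks the null geodesic γ : t ↦ p + t • u. -/
open Matrix MeasureTheory Filter Topology

noncomputable section

abbrev Vec4 : Type := Fin 4 → ℝ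
abbrev Mat4 : Type := Matrix (Fin 4) (Fin 4) ℝ

/-- The Minkowski inner product on ℝ⁴. -/
def mink (x y : Vec4) : ℝ := x 0 * y 0 - x 1 * y 1 - x 2 * y 2 - x 3 * y 3

/-- The matrix diag(1,-1,-1,-1). -/
def E : Mat4 := Matrix.diagonal ![1, -1, -1, -1]

def FutureCausal (x : Vec4) : Prop := 0 ≤ mink x x ∧ 0 ≤ x 0
def FutureTimelike (x : Vec4) : Prop := 0 < mink x x ∧ 0 < x 0
def FutureNull (x : Vec4) : Prop := x ≠ 0 ∧ mink x x = 0 ∧ 0 < x 0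
def UnitTimelike (x : Vec4) : Prop := FutureTimelike x ∧ mink x x = 1

/-- The dominant energy condition for a matrix. -/
def DEC (T : Mat4) : Prop :=
  ∀ ξ ζ : Vec4, FutureCausal ξ → FutureCausal ζ → 0 ≤ ∑ i, ∑ j, ξ i * T i j * ζ j

/-- ⟨T, x⟩ = Σᵢⱼ T i j * x i j. -/
def minner (T x : Mat4) : ℝ := ∑ i, ∑ j, T i j * x i j

/-- The cone D of finite sums of symmetrized products of future causal vectors. -/
def coneD : Set Mat4 :=
  { x | ∃ (n : ℕ) (ξ ζ : Fin n → Vec4),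
      (∀ k, FutureCausal (ξ k)) ∧ (∀ k, FutureCausal (ζ k)) ∧
      x = ∑ k, (1/2 : ℝ) • (vecMulVec (ξ k) (ζ k) + vecMulVec (ζ k) (ξ k)) }

/-- A symmetric matrix is generic if it lies in the interior of D, taken within
the space of symmetric matrices. -/
def Generic (x : Mat4) : Prop :=
  ∃ h : xᵀ = x, (⟨x, h⟩ : { A : Mat4 // Aᵀ = A }) ∈
    interior { A : { A : Mat4 // Aᵀ = A } | A.val ∈ coneD }

/-- Partial derivative in the a-th coordinate direction. -/
def pd (a : Fin 4) (f : Vec4 → ℝ) (p : Vec4) : ℝ := fderiv ℝ f p (Pi.single a 1)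

def SmoothMatField (T : Vec4 → Mat4) : Prop := ∀ a b, ContDiff ℝ (⊤ : ℕ∞) fun p => T p a b
def SymValued (T : Vec4 → Mat4) : Prop := ∀ p, (T p)ᵀ = T p
def DivFree (T : Vec4 → Mat4) : Prop := ∀ p b, ∑ a, pd a (fun q => T q a b) p = 0

/-- A collection of fields tracks a curve. -/
def Tracks (C : Set (Vec4 → Mat4)) (γ : ℝ → Vec4) : Prop :=
  ∀ x : Vec4 → Mat4, SmoothMatField x → HasCompactSupport x → SymValued x →
    (∃ O : Set Vec4, IsOpen O ∧ Set.range γ ⊆ O ∧ ∀ p ∈ O, x p ∈ coneD) →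
    (∃ t₀ : ℝ, Generic (x (γ t₀))) →
    ∃ T ∈ C, 0 < ∫ p, minner (T p) (x p)

/-- Maxwell stress-energy tensor of a field strength matrix. -/
def maxwellT (F : Mat4) : Mat4 :=
  F * E * F - ((1/4 : ℝ) * (E * F * E * F).trace) • E

/-- Source-free Maxwell equations. -/
def SolvesMaxwell (F : Vec4 → Mat4) : Prop :=
  (∀ p b, ∑ a, E a a * pd a (fun q => F q a b) p = 0) ∧
  (∀ p a b c, pd a (fun q => F q b c) p + pd b (fun q => F q c a) p
      + pd c (fun q => F q a b) p = 0)

/-- Klein–Gordon stress-energy tensor. -/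
def kgT (φ : Vec4 → ℝ) (m : ℝ) (p : Vec4) : Mat4 :=
  Matrix.of fun a b =>
    pd a φ p * pd b φ p
      - (1/2 : ℝ) * E a b * ((∑ c, E c c * (pd c φ p)^2) - m^2 * (φ p)^2)

/-- Mass-m Klein–Gordon equation. -/
def SolvesKG (φ : Vec4 → ℝ) (m : ℝ) : Prop :=
  ∀ p, pd 0 (pd 0 φ) p - pd 1 (pd 1 φ) p - pd 2 (pd 2 φ) p - pd 3 (pd 3 φ) p
    + m^2 * φ p = 0

/-- The collection of stress-energy tensors of smooth solutions to the source-free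
Maxwell equations. -/
def maxwellC : Set (Vec4 → Mat4) :=
  { T | ∃ F : Vec4 → Mat4, (∀ a b : Fin 4, ContDiff ℝ (⊤ : ℕ∞) fun p => F p a b) ∧
      (∀ p, (F p)ᵀ = -(F p)) ∧ SolvesMaxwell F ∧ T = fun p => maxwellT (F p) }

/-!
By Bateman's construction, suitable complex functions `α` (`phase`) and `β` (`slope`) turn every
entire profile `f` into a Maxwell field `Re (f(α) dα ∧ dβ)`. The field is null, so its stress-energy
tensor is a nonnegative multiple of `k kᵀ` for a null covector `k`, and therefore pairs
nonnegatively with `D` and positively with its interior. Since `Im α = |β|²`, the phase `α` vanishes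
exactly on the geodesic, and the profile `exp (n (i c α - α²))` has squared modulus
`exp (-2 n ((Re α)² + Im α (c - Im α)))`. Once `c` exceeds `Im α` on the support of the test field,
Laplace's method concentrates the integral on the geodesic as `n → ∞`.
-/

open Complex (I normSq)
open scoped ComplexConjugate

section Concentration

lemma mul_max_zero_mul_sub_abs_le_exp_mul {c t r : ℝ} (hc : 0 ≤ c) (h : 0 ≤ r ∨ t ≤ 0) :
    c * (max t 0 * r) - |r| ≤ Real.exp (c * t) * r := by
  rcases h with hr | ht
  · have hexp : c * max t 0 ≤ Real.exp (c * t) := by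
      rw [mul_max_of_nonneg _ _ hc, mul_zero]
      exact max_le (by linarith [Real.add_one_le_exp (c * t)]) (Real.exp_pos _).le
    linarith [mul_le_mul_of_nonneg_right hexp hr, abs_nonneg r]
  · have hexp : Real.exp (c * t) ≤ 1 :=
      Real.exp_le_one_iff.2 (mul_nonpos_of_nonneg_of_nonpos hc ht)
    have habs : |Real.exp (c * t) * r| ≤ |r| := by
      rw [abs_mul, Real.abs_exp]
      exact mul_le_of_le_one_left (abs_nonneg r) hexp
    rw [max_eq_right ht]
    linarith [neg_abs_le (Real.exp (c * t) * r)]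

variable {X : Type*} [TopologicalSpace X] [MeasurableSpace X] [OpensMeasurableSpace X]
  {μ : Measure X} [IsFiniteMeasureOnCompacts μ] [μ.IsOpenPosMeasure]

lemma exists_nat_integral_exp_mul_pos {φ R : X → ℝ} {q₀ : X} (hφ : Continuous φ)
    (hR : Continuous R) (hRc : HasCompactSupport R) (h : ∀ q, 0 ≤ R q ∨ φ q ≤ 0)
    (hφ₀ : 0 < φ q₀) (hR₀ : 0 < R q₀) :
    ∃ n : ℕ, 0 < ∫ q, Real.exp (n * φ q) * R q ∂μ := by
  let S : X → ℝ := fun q => max (φ q) 0 * R q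
  have hS : Continuous S := by fun_prop
  have hSc : HasCompactSupport S := hRc.mul_left
  have hS_nonneg : 0 ≤ S := fun q => (h q).elim (mul_nonneg (le_max_right _ _))
    fun hq => by simp [S, max_eq_right hq]
  have hS_pos : 0 < ∫ q, S q ∂μ :=
    hS.integral_pos_of_hasCompactSupport_nonneg_nonzero hSc hS_nonneg
      (mul_pos (lt_max_of_lt_left hφ₀) hR₀).ne'
  have hSi : Integrable S μ := hS.integrable_of_hasCompactSupport hSc
  have hRi : Integrable (fun q => |R q|) μ := (hR.integrable_of_hasCompactSupport hRc).abs
  obtain ⟨n, hn⟩ := exists_nat_gt ((∫ q, |R q| ∂μ) / ∫ q, S q ∂μ)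
  refine ⟨n, ?_⟩
  calc 0 < n * ∫ q, S q ∂μ - ∫ q, |R q| ∂μ := sub_pos.2 ((div_lt_iff₀ hS_pos).1 hn)
    _ = ∫ q, (n * S q - |R q|) ∂μ := by
      rw [integral_sub (hSi.const_mul _) hRi, integral_const_mul]
    _ ≤ ∫ q, Real.exp (n * φ q) * R q ∂μ := by
      refine integral_mono ((hSi.const_mul _).sub hRi) ?_ fun q =>
        mul_max_zero_mul_sub_abs_le_exp_mul n.cast_nonneg (h q)
      exact Continuous.integrable_of_hasCompactSupport (by fun_prop) hRc.mul_left

/-- Laplace's method: as `n → ∞` the weight `exp (-n * Q)` singles out the set `Q ≤ 0`, so only the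
sign of `R` near that set matters. -/
lemma exists_nat_integral_exp_neg_mul_pos {Q R : X → ℝ} {O : Set X} {q₀ : X}
    (hQ : Continuous Q) (hR : Continuous R) (hRc : HasCompactSupport R) (hO : IsOpen O)
    (hRO : ∀ q ∈ O, 0 ≤ R q) (hQO : ∀ q ∈ tsupport R \ O, 0 < Q q)
    (hQ₀ : Q q₀ ≤ 0) (hR₀ : 0 < R q₀) :
    ∃ n : ℕ, 0 < ∫ q, Real.exp (-n * Q q) * R q ∂μ := by
  obtain ⟨δ, hδ, hδQ⟩ : ∃ δ > 0, ∀ q ∈ tsupport R \ O, δ ≤ Q q :=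
    (hRc.isCompact.diff hO).exists_forall_le' hQ.continuousOn hQO
  have hsign (q : X) : 0 ≤ R q ∨ δ - Q q ≤ 0 := by
    by_cases hqO : q ∈ O
    · exact .inl (hRO q hqO)
    by_cases hqR : q ∈ tsupport R
    · exact .inr (sub_nonpos.2 (hδQ q ⟨hqR, hqO⟩))
    · exact .inl (image_eq_zero_of_notMem_tsupport hqR).ge
  obtain ⟨n, hn⟩ := exists_nat_integral_exp_mul_pos (μ := μ) (φ := fun q => δ - Q q) (q₀ := q₀)
    (by fun_prop) hR hRc hsign (by linarith) hR₀
  have hshift (q : X) : Real.exp (n * δ) * (Real.exp (-n * Q q) * R q) =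
      Real.exp (n * (δ - Q q)) * R q := by
    rw [← mul_assoc, ← Real.exp_add]
    ring_nf
  refine ⟨n, pos_of_mul_pos_right (a := Real.exp (n * δ)) ?_ (Real.exp_pos _).le⟩
  rwa [← integral_const_mul, funext hshift]

end Concentration

section EnergyCone

lemma FutureCausal.dotProduct_nonneg {k ξ : Vec4} (hk : FutureCausal k) (hξ : FutureCausal ξ) :
    0 ≤ k ⬝ᵥ ξ := by
  obtain ⟨hk, hk₀⟩ := hk
  obtain ⟨hξ, hξ₀⟩ := hξ
  simp only [mink] at hk hξ
  have cauchy_schwarz : (k 1 * ξ 1 + k 2 * ξ 2 + k 3 * ξ 3) ^ 2 ≤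
      (k 1 ^ 2 + k 2 ^ 2 + k 3 ^ 2) * (ξ 1 ^ 2 + ξ 2 ^ 2 + ξ 3 ^ 2) := by
    nlinarith [sq_nonneg (k 1 * ξ 2 - k 2 * ξ 1), sq_nonneg (k 1 * ξ 3 - k 3 * ξ 1),
      sq_nonneg (k 2 * ξ 3 - k 3 * ξ 2)]
  have hle : (k 1 * ξ 1 + k 2 * ξ 2 + k 3 * ξ 3) ^ 2 ≤ (k 0 * ξ 0) ^ 2 := by
    rw [mul_pow]
    exact cauchy_schwarz.trans (mul_le_mul (by linarith) (by linarith) (by positivity)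
      (by positivity))
  simp only [dotProduct, Fin.sum_univ_four]
  linarith [neg_le_of_abs_le (abs_le_of_sq_le_sq hle (mul_nonneg hk₀ hξ₀))]

lemma dotProduct_mul_dotProduct_nonneg {k ξ ζ : Vec4} (hk : 0 ≤ mink k k)
    (hξ : FutureCausal ξ) (hζ : FutureCausal ζ) : 0 ≤ (k ⬝ᵥ ξ) * (k ⬝ᵥ ζ) := by
  rcases le_total 0 (k 0) with hk₀ | hk₀
  · have hk' : FutureCausal k := ⟨hk, hk₀⟩
    exact mul_nonneg (hk'.dotProduct_nonneg hξ) (hk'.dotProduct_nonneg hζ)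
  · have hk' : FutureCausal (-k) := ⟨by simpa [mink] using hk, by simpa using hk₀⟩
    simpa using mul_nonneg (hk'.dotProduct_nonneg hξ) (hk'.dotProduct_nonneg hζ)

lemma dotProduct_mulVec_nonneg_of_mem_coneD {x : Mat4} {k : Vec4} (hx : x ∈ coneD)
    (hk : 0 ≤ mink k k) : 0 ≤ k ⬝ᵥ x *ᵥ k := by
  obtain ⟨n, ξ, ζ, hξ, hζ, rfl⟩ := hx
  rw [sum_mulVec, dotProduct_sum]
  refine Finset.sum_nonneg fun i _ => ?_
  have hterm : k ⬝ᵥ ((1 / 2 : ℝ) • (vecMulVec (ξ i) (ζ i) + vecMulVec (ζ i) (ξ i))) *ᵥ k =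
      (k ⬝ᵥ ξ i) * (k ⬝ᵥ ζ i) := by
    simp only [smul_mulVec, add_mulVec, vecMulVec_mulVec, dotProduct_smul, dotProduct_add,
      dotProduct_comm (ξ i) k, dotProduct_comm (ζ i) k, op_smul_eq_smul, smul_eq_mul]
    ring
  exact hterm ▸ dotProduct_mul_dotProduct_nonneg hk (hξ i) (hζ i)

lemma Generic.exists_pos_sub_smul_one_mem_coneD {x : Mat4} (hx : Generic x) :
    ∃ t > (0 : ℝ), x - t • (1 : Mat4) ∈ coneD := by
  obtain ⟨hsymm, hx⟩ := hx
  let c : ℝ → { A : Mat4 // Aᵀ = A } := fun t => ⟨x - t • (1 : Mat4), by simp [hsymm]⟩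
  have hc : Continuous c := Continuous.subtype_mk (by fun_prop) _
  have hc₀ : c 0 = ⟨x, hsymm⟩ := by simp [c]
  have hnear : ∀ᶠ t in 𝓝 (0 : ℝ), x - t • (1 : Mat4) ∈ coneD :=
    hc.continuousAt.eventually (hc₀ ▸ mem_interior_iff_mem_nhds.1 hx)
  obtain ⟨t, ht, ht_pos⟩ :=
    ((hnear.filter_mono nhdsWithin_le_nhds).and (self_mem_nhdsWithin (s := Set.Ioi 0))).exists
  exact ⟨t, ht_pos, ht⟩

lemma Generic.dotProduct_mulVec_pos {x : Mat4} {k : Vec4} (hx : Generic x)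
    (hk : 0 ≤ mink k k) (hk₀ : k ≠ 0) : 0 < k ⬝ᵥ x *ᵥ k := by
  obtain ⟨t, ht, hxt⟩ := hx.exists_pos_sub_smul_one_mem_coneD
  have hnonneg : 0 ≤ k ⬝ᵥ x *ᵥ k - t * (k ⬝ᵥ k) := by
    simpa [sub_mulVec, smul_mulVec, dotProduct_sub, dotProduct_smul] using
      dotProduct_mulVec_nonneg_of_mem_coneD hxt hk
  have hkk : 0 < k ⬝ᵥ k :=
    (dotProduct_self_star_nonneg k).lt_of_ne' (mt dotProduct_self_eq_zero.1 hk₀)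
  linarith [mul_pos ht hkk]

lemma minner_smul_vecMulVec_self (c : ℝ) (k : Vec4) (x : Mat4) :
    minner (c • vecMulVec k k) x = c * (k ⬝ᵥ x *ᵥ k) := by
  simp only [minner, dotProduct, mulVec, Matrix.smul_apply, vecMulVec_apply, smul_eq_mul,
    Finset.mul_sum]
  exact Finset.sum_congr rfl fun i _ => Finset.sum_congr rfl fun j _ => by ring

end EnergyCone

section MinkowskiForm

/-- The Minkowski form as a bilinear form, over any commutative ring of scalars; over `ℝ` it is
`mink`, over `ℂ` its complex-bilinear extension. -/
def minkForm (R : Type*) [CommRing R] : LinearMap.BilinForm R (Fin 4 → R) :=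
  Matrix.toBilin' (Matrix.diagonal ![1, -1, -1, -1])

variable {R : Type*} [CommRing R]

lemma minkForm_apply (x y : Fin 4 → R) :
    minkForm R x y = x 0 * y 0 - x 1 * y 1 - x 2 * y 2 - x 3 * y 3 := by
  simp [minkForm, Matrix.toBilin'_apply, Fin.sum_univ_four, Matrix.diagonal_apply, sub_eq_add_neg]

lemma minkForm_comm (x y : Fin 4 → R) :
    minkForm R x y = minkForm R y x := by
  simp only [minkForm_apply]
  ring

lemma minkForm_real (x y : Vec4) : minkForm ℝ x y = mink x y := minkForm_apply x y

lemma minkForm_ofReal_comp (x y : Vec4) :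
    minkForm ℂ (Complex.ofReal ∘ x) (Complex.ofReal ∘ y) = (minkForm ℝ x y : ℂ) := by
  simp [minkForm_apply]

end MinkowskiForm

section StressEnergy

variable {R : Type*} [CommRing R]

/-- The exterior product of two covectors, as an antisymmetric matrix. -/
def wedge (x y : Fin 4 → R) : Matrix (Fin 4) (Fin 4) R :=
  vecMulVec x y - vecMulVec y x

lemma wedge_apply (x y : Fin 4 → R) (i j : Fin 4) :
    wedge x y i j = x i * y j - y i * x j := rfl

lemma transpose_wedge (x y : Fin 4 → R) :
    (wedge x y)ᵀ = -wedge x y := by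
  simp [wedge, transpose_vecMulVec]

lemma wedge_contract (x y v : Fin 4 → R) (j : Fin 4) :
    wedge x y 0 j * v 0 - wedge x y 1 j * v 1 - wedge x y 2 j * v 2 - wedge x y 3 j * v 3 =
      minkForm R x v * y j - minkForm R y v * x j := by
  simp only [wedge_apply, minkForm_apply]
  ring

lemma dotProduct_E_mulVec (x y : Vec4) : x ⬝ᵥ E *ᵥ y = minkForm ℝ x y := by
  simp [minkForm_apply, E, dotProduct, Fin.sum_univ_four, mulVec_diagonal, sub_eq_add_neg]

lemma vecMulVec_mul_E_mul_vecMulVec (w x y z : Vec4) :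
    vecMulVec w x * E * vecMulVec y z = minkForm ℝ x y • vecMulVec w z := by
  rw [Matrix.mul_assoc, mul_vecMulVec, vecMulVec_mul_vecMulVec, dotProduct_E_mulVec,
    vecMulVec_smul]

lemma trace_E_mul_vecMulVec (x y : Vec4) : (E * vecMulVec x y).trace = minkForm ℝ x y := by
  rw [mul_vecMulVec, trace_vecMulVec, dotProduct_comm, dotProduct_E_mulVec, minkForm_comm]

lemma maxwellT_wedge {k q : Vec4} (hkk : minkForm ℝ k k = 0) (hkq : minkForm ℝ k q = 0) :
    maxwellT (wedge k q) = -minkForm ℝ q q • vecMulVec k k := by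
  have hsq : wedge k q * E * wedge k q = -minkForm ℝ q q • vecMulVec k k := by
    simp [wedge, Matrix.sub_mul, Matrix.mul_sub, vecMulVec_mul_E_mul_vecMulVec, minkForm_comm q k,
      hkk, hkq]
  have htrace : (E * wedge k q * E * wedge k q).trace = 0 := by
    rw [Matrix.mul_assoc, Matrix.mul_assoc, ← Matrix.mul_assoc (wedge k q), hsq, Matrix.mul_smul,
      trace_smul, trace_E_mul_vecMulVec, hkk, smul_zero]
  rw [maxwellT, hsq, htrace, mul_zero, zero_smul, sub_zero]

end StressEnergy

section Gradient

/-- The real-linear form on spacetime with complex components `c`; it serves to record the gradients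
of complex-valued functions. -/
def pairing (c : Fin 4 → ℂ) : Vec4 →L[ℝ] ℂ :=
  (Fintype.linearCombination ℝ c).toContinuousLinearMap

lemma pairing_apply (c : Fin 4 → ℂ) (y : Vec4) : pairing c y = ∑ i, y i * c i := by
  simp [pairing, Fintype.linearCombination_apply]

lemma pairing_ofReal_comp (c y : Vec4) : pairing (Complex.ofReal ∘ c) y = (c ⬝ᵥ y : ℝ) := by
  simp [pairing_apply, dotProduct, mul_comm]

lemma pairing_star (c : Fin 4 → ℂ) (y : Vec4) : pairing (star c) y = conj (pairing c y) := by
  simp [pairing_apply]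

lemma pd_re {g : Vec4 → ℂ} {c : Fin 4 → ℂ} {y : Vec4} (hg : HasFDerivAt g (pairing c) y)
    (a : Fin 4) : pd a (fun q => (g q).re) y = (c a).re := by
  have hre : HasFDerivAt (fun q => (g q).re) (Complex.reCLM.comp (pairing c)) y :=
    Complex.reCLM.hasFDerivAt.comp y hg
  rw [pd, hre.fderiv]
  simp [pairing, Fintype.linearCombination_apply_single]

lemma solvesMaxwell_re {G : Vec4 → Matrix (Fin 4) (Fin 4) ℂ}
    {D : Vec4 → Fin 4 → Fin 4 → Fin 4 → ℂ}
    (hG : ∀ y i j, HasFDerivAt (fun q => G q i j) (pairing (D y i j)) y)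
    (hdiv : ∀ y j, D y 0 j 0 - D y 1 j 1 - D y 2 j 2 - D y 3 j 3 = 0)
    (hcyclic : ∀ y i j k, D y j k i + D y k i j + D y i j k = 0) :
    SolvesMaxwell fun y => (G y).map Complex.re := by
  refine ⟨fun y j => ?_, fun y i j k => ?_⟩
  · simpa [pd_re (hG _ _ _), E, Fin.sum_univ_four, ← sub_eq_add_neg] using
      congrArg Complex.re (hdiv y j)
  · simp only [map_apply, pd_re (hG _ _ _), ← Complex.add_re, hcyclic, Complex.zero_re]

lemma pd_comp_sub_const (a : Fin 4) (f : Vec4 → ℝ) (p q : Vec4) :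
    pd a (fun y => f (y - p)) q = pd a f (q - p) := by
  rw [pd, fderiv_comp_sub, pd]

lemma SolvesMaxwell.comp_sub_const {F : Vec4 → Mat4} (hF : SolvesMaxwell F) (p : Vec4) :
    SolvesMaxwell fun q => F (q - p) := by
  have hpd (a b c : Fin 4) (q : Vec4) :
      pd a (fun q => F (q - p) b c) q = pd a (fun y => F y b c) (q - p) :=
    pd_comp_sub_const a (fun y => F y b c) p q
  exact ⟨fun q b => by simpa only [hpd] using hF.1 (q - p) b,
    fun q a b c => by simpa only [hpd] using hF.2 (q - p) a b c⟩

end Gradient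

/-- A real null frame of covectors: `l` and `n` are null, and the unit spacelike `e₁`, `e₂` complete
them to a basis. The normalisation `⟨l, n⟩ = 2`, in place of the `1` of Newman and Penrose, avoids
square roots. -/
structure NullFrame where
  l : Vec4
  n : Vec4
  e₁ : Vec4
  e₂ : Vec4
  l_l : minkForm ℝ l l = 0
  n_n : minkForm ℝ n n = 0
  l_n : minkForm ℝ l n = 2
  l_e₁ : minkForm ℝ l e₁ = 0
  l_e₂ : minkForm ℝ l e₂ = 0
  n_e₁ : minkForm ℝ n e₁ = 0
  n_e₂ : minkForm ℝ n e₂ = 0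
  e₁_e₁ : minkForm ℝ e₁ e₁ = -1
  e₂_e₂ : minkForm ℝ e₂ e₂ = -1
  e₁_e₂ : minkForm ℝ e₁ e₂ = 0

namespace NullFrame

attribute [simp] l_l n_n l_n l_e₁ l_e₂ n_e₁ n_e₂ e₁_e₁ e₂_e₂ e₁_e₂

variable (τ : NullFrame)

@[simp] lemma n_l : minkForm ℝ τ.n τ.l = 2 := by rw [minkForm_comm, τ.l_n]
@[simp] lemma e₁_l : minkForm ℝ τ.e₁ τ.l = 0 := by rw [minkForm_comm, τ.l_e₁]
@[simp] lemma e₂_l : minkForm ℝ τ.e₂ τ.l = 0 := by rw [minkForm_comm, τ.l_e₂]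
@[simp] lemma e₁_n : minkForm ℝ τ.e₁ τ.n = 0 := by rw [minkForm_comm, τ.n_e₁]
@[simp] lemma e₂_n : minkForm ℝ τ.e₂ τ.n = 0 := by rw [minkForm_comm, τ.n_e₂]
@[simp] lemma e₂_e₁ : minkForm ℝ τ.e₂ τ.e₁ = 0 := by rw [minkForm_comm, τ.e₁_e₂]

lemma mink_l_l : mink τ.l τ.l = 0 := (minkForm_real _ _).symm.trans τ.l_l

lemma l_ne_zero : τ.l ≠ 0 := by
  intro h
  simpa [h] using τ.l_n

/-- The complex null covector `e₁ + i e₂`. -/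
def m : Fin 4 → ℂ := Complex.ofReal ∘ τ.e₁ + I • Complex.ofReal ∘ τ.e₂

lemma m_apply (i : Fin 4) : τ.m i = τ.e₁ i + I * τ.e₂ i := rfl

lemma star_m : star τ.m = Complex.ofReal ∘ τ.e₁ - I • Complex.ofReal ∘ τ.e₂ := by
  ext i
  simp [m_apply, sub_eq_add_neg]

section NullForm

/-- The field strength of a null electromagnetic field with propagation covector `l` and complex
amplitude `A`. -/
def nullForm (A : ℂ) : Mat4 := wedge τ.l (A.re • τ.e₁ - A.im • τ.e₂)

lemma maxwellT_nullForm (A : ℂ) :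
    maxwellT (τ.nullForm A) = normSq A • vecMulVec τ.l τ.l := by
  rw [nullForm, maxwellT_wedge τ.l_l (by simp)]
  congr 1
  simp [Complex.normSq_apply]
  ring

end NullForm

section NullRotation

/-- The null rotation of the frame about `n` with parameter `b`. -/
def nullRotation (b : ℂ) : NullFrame where
  l := τ.l - (2 * b.re) • τ.e₁ - (2 * b.im) • τ.e₂ + normSq b • τ.n
  n := τ.n
  e₁ := τ.e₁ - b.re • τ.n
  e₂ := τ.e₂ - b.im • τ.n
  l_l := by simp [Complex.normSq_apply]; ring
  n_n := by simp
  l_n := by simp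
  l_e₁ := by simp; ring
  l_e₂ := by simp; ring
  n_e₁ := by simp
  n_e₂ := by simp
  e₁_e₁ := by simp
  e₂_e₂ := by simp
  e₁_e₂ := by simp

/-- The complex null covector `l - b m̄`: modulo `holM b` it equals the propagation covector
`(τ.nullRotation b).l`, and it is holomorphic in `b`. -/
def holL (b : ℂ) : Fin 4 → ℂ := Complex.ofReal ∘ τ.l - b • star τ.m

/-- The complex null covector `m - b n` of the frame `τ.nullRotation b`. -/
def holM (b : ℂ) : Fin 4 → ℂ := τ.m - b • Complex.ofReal ∘ τ.n

lemma minkForm_holL_holL (b : ℂ) : minkForm ℂ (τ.holL b) (τ.holL b) = 0 := by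
  rw [holL, star_m]
  simp [minkForm_ofReal_comp, mul_left_comm I]

lemma minkForm_holL_holM (b : ℂ) : minkForm ℂ (τ.holL b) (τ.holM b) = 0 := by
  rw [holL, holM, star_m, m]
  simp [minkForm_ofReal_comp]
  ring

lemma minkForm_holM_holM (b : ℂ) : minkForm ℂ (τ.holM b) (τ.holM b) = 0 := by
  simp [holM, m, minkForm_ofReal_comp]

lemma minkForm_n_holL (b : ℂ) :
    minkForm ℂ (Complex.ofReal ∘ τ.n) (τ.holL b) = 2 := by
  simp [holL, star_m, minkForm_ofReal_comp]

lemma minkForm_n_holM (b : ℂ) :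
    minkForm ℂ (Complex.ofReal ∘ τ.n) (τ.holM b) = 0 := by
  simp [holM, m, minkForm_ofReal_comp]

lemma minkForm_star_m_holM (b : ℂ) : minkForm ℂ (star τ.m) (τ.holM b) = -2 := by
  rw [holM, star_m, m]
  simp [minkForm_ofReal_comp]
  ring

lemma nullForm_nullRotation (A b : ℂ) :
    (τ.nullRotation b).nullForm A = (A • wedge (τ.holL b) (τ.holM b)).map Complex.re := by
  ext i j
  simp [nullForm, nullRotation, wedge_apply, holL, holM, m_apply, Complex.normSq_apply]
  ring

end NullRotation

section Beam

/-- The common denominator of `slope` and `amplitude`; its imaginary part is `1`, so that it never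
vanishes. -/
def scale (y : Vec4) : ℂ := pairing (Complex.ofReal ∘ τ.n) y + I

/-- The parameter of the null rotation that turns `τ` into the frame of the beam at `y`. -/
def slope (y : Vec4) : ℂ := pairing τ.m y * (τ.scale y)⁻¹

/-- The complex phase of the beam: its gradient and that of `slope` span the totally null plane of
`holL (slope y)` and `holM (slope y)`, which is Bateman's condition. -/
def phase (y : Vec4) : ℂ :=
  pairing (Complex.ofReal ∘ τ.l) y - pairing (star τ.m) y * τ.slope y

/-- The complex amplitude of the beam with profile `f`. -/
def amplitude (f : ℂ → ℂ) (y : Vec4) : ℂ := f (τ.phase y) * (τ.scale y)⁻¹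

/-- Bateman's null field `Re (f (phase) d phase ∧ d slope)`. -/
def beam (f : ℂ → ℂ) (y : Vec4) : Mat4 :=
  (τ.nullRotation (τ.slope y)).nullForm (τ.amplitude f y)

lemma scale_ne_zero (y : Vec4) : τ.scale y ≠ 0 := by
  intro h
  simpa [scale, pairing_ofReal_comp] using congrArg Complex.im h

lemma hasFDerivAt_inv_scale (y : Vec4) :
    HasFDerivAt (fun y => (τ.scale y)⁻¹)
      (pairing (-((τ.scale y)⁻¹ * (τ.scale y)⁻¹) • Complex.ofReal ∘ τ.n)) y := by
  have hscale : HasFDerivAt τ.scale (pairing (Complex.ofReal ∘ τ.n)) y :=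
    (pairing (Complex.ofReal ∘ τ.n)).hasFDerivAt.add_const I
  refine ((hasDerivAt_inv (τ.scale_ne_zero y)).comp_hasFDerivAt y hscale).congr_fderiv ?_
  ext v
  simp [pairing_apply, Fin.sum_univ_four]
  ring

lemma hasFDerivAt_slope (y : Vec4) :
    HasFDerivAt τ.slope (pairing ((τ.scale y)⁻¹ • τ.holM (τ.slope y))) y := by
  refine ((pairing τ.m).hasFDerivAt.mul (τ.hasFDerivAt_inv_scale y)).congr_fderiv ?_
  ext v
  simp [slope, holM, pairing_apply, Fin.sum_univ_four]
  ring

lemma hasFDerivAt_phase (y : Vec4) :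
    HasFDerivAt τ.phase (pairing (τ.holL (τ.slope y) -
      (pairing (star τ.m) y * (τ.scale y)⁻¹) • τ.holM (τ.slope y))) y := by
  refine ((pairing (Complex.ofReal ∘ τ.l)).hasFDerivAt.sub
    ((pairing (star τ.m)).hasFDerivAt.mul (τ.hasFDerivAt_slope y))).congr_fderiv ?_
  ext v
  simp [holL, pairing_apply, Fin.sum_univ_four]
  ring

variable {f : ℂ → ℂ}

lemma hasFDerivAt_amplitude (hf : Differentiable ℂ f) (y : Vec4) :
    HasFDerivAt (τ.amplitude f) (pairing
      ((deriv f (τ.phase y) * (τ.scale y)⁻¹) • τ.holL (τ.slope y) -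
        (deriv f (τ.phase y) * (τ.scale y)⁻¹ * (pairing (star τ.m) y * (τ.scale y)⁻¹)) •
          τ.holM (τ.slope y) -
        (τ.amplitude f y * (τ.scale y)⁻¹) • Complex.ofReal ∘ τ.n)) y := by
  refine (((hf (τ.phase y)).hasDerivAt.comp_hasFDerivAt y (τ.hasFDerivAt_phase y)).mul
    (τ.hasFDerivAt_inv_scale y)).congr_fderiv ?_
  ext v
  simp [amplitude, pairing_apply, Fin.sum_univ_four]
  ring

lemma hasFDerivAt_holL_slope (y : Vec4) (i : Fin 4) :
    HasFDerivAt (fun q => τ.holL (τ.slope q) i)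
      (pairing (-(star τ.m i * (τ.scale y)⁻¹) • τ.holM (τ.slope y))) y := by
  refine (((τ.hasFDerivAt_slope y).mul_const (star τ.m i)).const_sub (τ.l i : ℂ)).congr_fderiv ?_
  ext v
  simp [pairing_apply, Fin.sum_univ_four]
  ring

lemma hasFDerivAt_holM_slope (y : Vec4) (i : Fin 4) :
    HasFDerivAt (fun q => τ.holM (τ.slope q) i)
      (pairing (-(τ.n i * (τ.scale y)⁻¹) • τ.holM (τ.slope y))) y := by
  refine (((τ.hasFDerivAt_slope y).mul_const (τ.n i : ℂ)).const_sub (τ.m i)).congr_fderiv ?_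
  ext v
  simp [pairing_apply, Fin.sum_univ_four]
  ring

/-- The gradient of the `(i, j)` component of the complex field `A • wedge (holL b) (holM b)`, when
`dA = g holL b - h holM b - k n` and `A db = k holM b`. -/
def fieldGradient (b g h k : ℂ) (i j : Fin 4) : Fin 4 → ℂ :=
  wedge (τ.holL b) (τ.holM b) i j •
      (g • τ.holL b - h • τ.holM b - k • Complex.ofReal ∘ τ.n) -
    (k * (wedge (star τ.m) (τ.holM b) i j + wedge (τ.holL b) (Complex.ofReal ∘ τ.n) i j)) •
      τ.holM b

lemma fieldGradient_div (b g h k : ℂ) (j : Fin 4) :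
    τ.fieldGradient b g h k 0 j 0 - τ.fieldGradient b g h k 1 j 1 -
      τ.fieldGradient b g h k 2 j 2 - τ.fieldGradient b g h k 3 j 3 = 0 := by
  have hLM := wedge_contract (τ.holL b) (τ.holM b)
    (g • τ.holL b - h • τ.holM b - k • Complex.ofReal ∘ τ.n) j
  have hmM := wedge_contract (star τ.m) (τ.holM b) (τ.holM b) j
  have hLn := wedge_contract (τ.holL b) (Complex.ofReal ∘ τ.n) (τ.holM b) j
  simp only [map_sub, map_smul, smul_eq_mul, minkForm_comm _ (Complex.ofReal ∘ τ.n),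
    minkForm_comm (τ.holM b) (τ.holL b), τ.minkForm_holL_holL, τ.minkForm_holL_holM,
    τ.minkForm_holM_holM, τ.minkForm_n_holL, τ.minkForm_n_holM, τ.minkForm_star_m_holM]
    at hLM hmM hLn
  simp only [fieldGradient, Pi.sub_apply, Pi.smul_apply, smul_eq_mul] at hLM ⊢
  linear_combination hLM - k * (hmM + hLn)

lemma fieldGradient_cyclic (b g h k : ℂ) (i₁ i₂ i₃ : Fin 4) :
    τ.fieldGradient b g h k i₂ i₃ i₁ + τ.fieldGradient b g h k i₃ i₁ i₂ +
      τ.fieldGradient b g h k i₁ i₂ i₃ = 0 := by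
  simp only [fieldGradient, wedge_apply, Pi.sub_apply, Pi.smul_apply, smul_eq_mul]
  ring

lemma beam_eq (f : ℂ → ℂ) (y : Vec4) :
    τ.beam f y = (τ.amplitude f y • wedge (τ.holL (τ.slope y)) (τ.holM (τ.slope y))).map
      Complex.re :=
  τ.nullForm_nullRotation _ _

lemma solvesMaxwell_beam (hf : Differentiable ℂ f) : SolvesMaxwell (τ.beam f) := by
  rw [funext (τ.beam_eq f)]
  refine solvesMaxwell_re (D := fun y => τ.fieldGradient (τ.slope y)
    (deriv f (τ.phase y) * (τ.scale y)⁻¹)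
    (deriv f (τ.phase y) * (τ.scale y)⁻¹ * (pairing (star τ.m) y * (τ.scale y)⁻¹))
    (τ.amplitude f y * (τ.scale y)⁻¹)) (fun y i j => ?_)
    (fun y => τ.fieldGradient_div _ _ _ _) (fun y => τ.fieldGradient_cyclic _ _ _ _)
  have hL := τ.hasFDerivAt_holL_slope y
  have hM := τ.hasFDerivAt_holM_slope y
  refine ((τ.hasFDerivAt_amplitude hf y).mul
    (((hL i).mul (hM j)).sub ((hM i).mul (hL j)))).congr_fderiv ?_
  ext v
  simp [fieldGradient, wedge_apply, pairing_apply, Fin.sum_univ_four]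
  ring

lemma contDiff_inv_scale {k : WithTop ℕ∞} : ContDiff ℝ k fun y => (τ.scale y)⁻¹ :=
  ((pairing (Complex.ofReal ∘ τ.n)).contDiff.add contDiff_const).inv τ.scale_ne_zero

lemma contDiff_slope {k : WithTop ℕ∞} : ContDiff ℝ k τ.slope :=
  (pairing τ.m).contDiff.mul τ.contDiff_inv_scale

lemma contDiff_phase {k : WithTop ℕ∞} : ContDiff ℝ k τ.phase :=
  (pairing (Complex.ofReal ∘ τ.l)).contDiff.sub
    ((pairing (star τ.m)).contDiff.mul τ.contDiff_slope)

lemma contDiff_beam (hf : Differentiable ℂ f) {k : WithTop ℕ∞} (i j : Fin 4) :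
    ContDiff ℝ k fun y => τ.beam f y i j := by
  have hfR : ContDiff ℝ k f := hf.contDiff.restrict_scalars ℝ
  have hamplitude : ContDiff ℝ k (τ.amplitude f) :=
    (hfR.comp τ.contDiff_phase).mul τ.contDiff_inv_scale
  have hL (i : Fin 4) : ContDiff ℝ k fun y => τ.holL (τ.slope y) i :=
    contDiff_const.sub (τ.contDiff_slope.mul contDiff_const)
  have hM (i : Fin 4) : ContDiff ℝ k fun y => τ.holM (τ.slope y) i :=
    contDiff_const.sub (τ.contDiff_slope.mul contDiff_const)
  simp only [beam_eq]
  exact Complex.reCLM.contDiff.comp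
    (hamplitude.mul (((hL i).mul (hM j)).sub ((hM i).mul (hL j))))

lemma maxwellT_beam_sub_mem_maxwellC (hf : Differentiable ℂ f) (p : Vec4) :
    (fun q => maxwellT (τ.beam f (q - p))) ∈ maxwellC :=
  ⟨fun q => τ.beam f (q - p),
    fun i j => (τ.contDiff_beam hf i j).comp (contDiff_id.sub contDiff_const),
    fun _ => transpose_wedge _ _, (τ.solvesMaxwell_beam hf).comp_sub_const p, rfl⟩

lemma phase_im (y : Vec4) : (τ.phase y).im = normSq (τ.slope y) := by
  have hscale : τ.slope y * τ.scale y = pairing τ.m y :=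
    inv_mul_cancel_right₀ (τ.scale_ne_zero y) _
  have hstar : pairing (star τ.m) y * τ.slope y = normSq (τ.slope y) * conj (τ.scale y) := by
    rw [pairing_star, ← hscale, map_mul, Complex.normSq_eq_conj_mul_self]
    ring
  rw [phase, hstar]
  simp [scale, pairing_ofReal_comp]

lemma phase_im_nonneg (y : Vec4) : 0 ≤ (τ.phase y).im :=
  (τ.phase_im y).symm ▸ Complex.normSq_nonneg _

lemma phase_eq_zero_iff {y : Vec4} :
    τ.phase y = 0 ↔ τ.l ⬝ᵥ y = 0 ∧ τ.e₁ ⬝ᵥ y = 0 ∧ τ.e₂ ⬝ᵥ y = 0 := by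
  have hm : pairing τ.m y = (τ.e₁ ⬝ᵥ y : ℝ) + I * (τ.e₂ ⬝ᵥ y : ℝ) := by
    simp only [← pairing_ofReal_comp]
    simp [pairing_apply, m_apply, Fin.sum_univ_four]
    ring
  have hslope : τ.slope y = 0 ↔ τ.e₁ ⬝ᵥ y = 0 ∧ τ.e₂ ⬝ᵥ y = 0 := by
    rw [slope, mul_eq_zero, or_iff_left (inv_ne_zero (τ.scale_ne_zero y)), hm]
    simp [Complex.ext_iff]
  rw [← hslope]
  constructor
  · intro h
    have hs : τ.slope y = 0 := by rw [← Complex.normSq_eq_zero, ← phase_im, h, Complex.zero_im]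
    rw [phase, hs, mul_zero, sub_zero, pairing_ofReal_comp, Complex.ofReal_eq_zero] at h
    exact ⟨h, hs⟩
  · rintro ⟨hl, hs⟩
    rw [phase, pairing_ofReal_comp, hl, hs, mul_zero, sub_zero, Complex.ofReal_zero]

end Beam
end NullFrame

section FrameOfBasis

open scoped InnerProductSpace

lemma exists_orthonormalBasis_apply_eq {𝕜 ι V : Type*} [RCLike 𝕜] [NormedAddCommGroup V]
    [InnerProductSpace 𝕜 V] [FiniteDimensional 𝕜 V] [Fintype ι]
    (hcard : Module.finrank 𝕜 V = Fintype.card ι) (i : ι) {v : V} (hv : ‖v‖ = 1) :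
    ∃ b : OrthonormalBasis ι 𝕜 V, b i = v := by
  have hv' : Orthonormal 𝕜 (({i} : Set ι).domRestrict fun _ => v) :=
    orthonormal_subsingleton_iff.2 fun _ => hv
  obtain ⟨b, hb⟩ := hv'.exists_orthonormalBasis_extension_of_card_eq hcard
  exact ⟨b, hb i rfl⟩

/-- The spacetime vector with time component `t` and space component `v`. -/
def ofTimeSpace (t : ℝ) (v : EuclideanSpace ℝ (Fin 3)) : Vec4 := vecCons t v

lemma minkForm_ofTimeSpace (s t : ℝ) (v w : EuclideanSpace ℝ (Fin 3)) :
    minkForm ℝ (ofTimeSpace s v) (ofTimeSpace t w) = s * t - ⟪v, w⟫_ℝ := by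
  simp [minkForm_apply, ofTimeSpace, PiLp.inner_apply, Fin.sum_univ_three]
  ring

lemma ofTimeSpace_dotProduct (s t : ℝ) (v w : EuclideanSpace ℝ (Fin 3)) :
    ofTimeSpace s v ⬝ᵥ ofTimeSpace t w = s * t + ⟪v, w⟫_ℝ := by
  simp [ofTimeSpace, PiLp.inner_apply, dotProduct, Fin.sum_univ_succ, mul_comm]

lemma ofTimeSpace_inj {s t : ℝ} {v w : EuclideanSpace ℝ (Fin 3)} :
    ofTimeSpace s v = ofTimeSpace t w ↔ s = t ∧ v = w :=
  vecCons_inj.trans (and_congr_right' (WithLp.ofLp_injective 2).eq_iff)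

lemma smul_ofTimeSpace (c t : ℝ) (v : EuclideanSpace ℝ (Fin 3)) :
    c • ofTimeSpace t v = ofTimeSpace (c * t) (c • v) := by
  simp [ofTimeSpace]

lemma exists_eq_ofTimeSpace (y : Vec4) : ∃ t v, y = ofTimeSpace t v :=
  ⟨y 0, WithLp.toLp 2 (vecTail y), (cons_head_tail y).symm⟩

variable (b : OrthonormalBasis (Fin 3) ℝ (EuclideanSpace ℝ (Fin 3)))

/-- The null frame whose spatial axes are the orthonormal basis `b`; as a covector, `l` annihilates
the direction of light moving along `b 2`. -/
def NullFrame.ofOrthonormalBasis : NullFrame where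
  l := ofTimeSpace 1 (-b 2)
  n := ofTimeSpace 1 (b 2)
  e₁ := ofTimeSpace 0 (b 0)
  e₂ := ofTimeSpace 0 (b 1)
  l_l := by simp [minkForm_ofTimeSpace]
  n_n := by simp [minkForm_ofTimeSpace]
  l_n := by norm_num [minkForm_ofTimeSpace]
  l_e₁ := by simp [minkForm_ofTimeSpace]
  l_e₂ := by simp [minkForm_ofTimeSpace]
  n_e₁ := by simp [minkForm_ofTimeSpace]
  n_e₂ := by simp [minkForm_ofTimeSpace]
  e₁_e₁ := by simp [minkForm_ofTimeSpace]
  e₂_e₂ := by simp [minkForm_ofTimeSpace]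
  e₁_e₂ := by simp [minkForm_ofTimeSpace]

lemma NullFrame.phase_ofOrthonormalBasis_eq_zero_iff {y : Vec4} :
    (NullFrame.ofOrthonormalBasis b).phase y = 0 ↔ ∃ t : ℝ, y = t • ofTimeSpace 1 (b 2) := by
  obtain ⟨s, v, rfl⟩ := exists_eq_ofTimeSpace y
  simp only [NullFrame.phase_eq_zero_iff, NullFrame.ofOrthonormalBasis, ofTimeSpace_dotProduct]
  constructor
  · rintro ⟨hl, h₀, h₁⟩
    have hs : ⟪b 2, v⟫_ℝ = s := by linarith [inner_neg_left (𝕜 := ℝ) (b 2) v]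
    have hv : v = s • b 2 := by
      rw [zero_mul, zero_add] at h₀ h₁
      simpa [Fin.sum_univ_three, hs, h₀, h₁] using (b.sum_repr' v).symm
    exact ⟨s, by rw [smul_ofTimeSpace, ← hv, mul_one]⟩
  · rintro ⟨t, ht⟩
    rw [smul_ofTimeSpace, mul_one] at ht
    obtain ⟨rfl, rfl⟩ := ofTimeSpace_inj.1 ht
    simp [inner_smul_right]

lemma exists_eq_smul_ofTimeSpace {u : Vec4} (hu₀ : u ≠ 0) (hu : mink u u = 0) :
    ∃ (c : ℝ) (v : EuclideanSpace ℝ (Fin 3)), c ≠ 0 ∧ ‖v‖ = 1 ∧ u = c • ofTimeSpace 1 v := by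
  obtain ⟨s, v, rfl⟩ := exists_eq_ofTimeSpace u
  rw [← minkForm_real, minkForm_ofTimeSpace, real_inner_self_eq_norm_mul_norm] at hu
  have hnorm : |s| = ‖v‖ := by
    rw [← abs_norm v, abs_eq_abs, ← mul_self_eq_mul_self_iff]
    linarith
  have hs : s ≠ 0 := by
    rintro rfl
    rw [abs_zero, eq_comm, norm_eq_zero] at hnorm
    exact hu₀ (by simp [hnorm, ofTimeSpace])
  refine ⟨s, s⁻¹ • v, hs, ?_, ?_⟩
  · rw [norm_smul, norm_inv, Real.norm_eq_abs, hnorm, inv_mul_cancel₀ (hnorm ▸ abs_ne_zero.2 hs)]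
  · rw [smul_ofTimeSpace, mul_one, smul_inv_smul₀ hs]

lemma NullFrame.exists_phase_sub_eq_zero_iff (p : Vec4) {u : Vec4} (hu₀ : u ≠ 0)
    (hu : mink u u = 0) :
    ∃ τ : NullFrame, ∀ q, τ.phase (q - p) = 0 ↔ ∃ t : ℝ, q = p + t • u := by
  obtain ⟨c, v, hc, hv, rfl⟩ := exists_eq_smul_ofTimeSpace hu₀ hu
  obtain ⟨b, rfl⟩ := exists_orthonormalBasis_apply_eq finrank_euclideanSpace 2 hv
  refine ⟨.ofOrthonormalBasis b, fun q => (phase_ofOrthonormalBasis_eq_zero_iff b).trans ?_⟩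
  simp only [sub_eq_iff_eq_add', smul_smul]
  exact (mul_right_surjective₀ hc).exists

end FrameOfBasis

section Gaussian

/-- The profile of a beam concentrated where its phase vanishes; the linear term compensates for the
growth of `exp (-n * z ^ 2)` in the imaginary directions `0 < z.im < c`. -/
def gaussian (c : ℝ) (n : ℕ) (z : ℂ) : ℂ := Complex.exp (n * (c * I * z - z ^ 2))

/-- The exponential rate at which `normSq (gaussian c n z)` decays as `n → ∞`. -/
def decayRate (c : ℝ) (z : ℂ) : ℝ := 2 * (z.re ^ 2 + z.im * (c - z.im))

lemma differentiable_gaussian (c : ℝ) (n : ℕ) : Differentiable ℂ (gaussian c n) := by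
  unfold gaussian
  fun_prop

lemma normSq_gaussian (c : ℝ) (n : ℕ) (z : ℂ) :
    normSq (gaussian c n z) = Real.exp (-n * decayRate c z) := by
  rw [gaussian, Complex.normSq_eq_norm_sq, Complex.norm_exp, ← Real.exp_nat_mul]
  congr 1
  simp [decayRate, pow_two]
  ring

lemma decayRate_pos {c : ℝ} {z : ℂ} (hz : z ≠ 0) (hz₀ : 0 ≤ z.im) (hzc : z.im < c) :
    0 < decayRate c z := by
  rcases hz₀.eq_or_lt with him | him
  · have hre : z.re ≠ 0 := fun hre => hz (Complex.ext hre him.symm)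
    rw [decayRate, ← him, zero_mul, add_zero]
    positivity
  · exact mul_pos two_pos (add_pos_of_nonneg_of_pos (sq_nonneg _) (mul_pos him (sub_pos.2 hzc)))

lemma decayRate_zero (c : ℝ) : decayRate c 0 = 0 := by simp [decayRate]

lemma continuous_decayRate (c : ℝ) : Continuous (decayRate c) := by
  unfold decayRate
  fun_prop

end Gaussian

namespace NullFrame

variable (τ : NullFrame)

/-- The integrand `⟨T, x⟩` for the stress-energy `T` of a beam, stripped of the factor coming from
the profile. -/
def flux (y : Vec4) (x : Mat4) : ℝ := (normSq (τ.scale y))⁻¹ *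
  ((τ.nullRotation (τ.slope y)).l ⬝ᵥ x *ᵥ (τ.nullRotation (τ.slope y)).l)

lemma minner_maxwellT_beam (f : ℂ → ℂ) (y : Vec4) (x : Mat4) :
    minner (maxwellT (τ.beam f y)) x = normSq (f (τ.phase y)) * τ.flux y x := by
  rw [beam, maxwellT_nullForm, minner_smul_vecMulVec_self, amplitude, map_mul, map_inv₀, mul_assoc,
    flux]

lemma flux_nonneg (y : Vec4) {x : Mat4} (hx : x ∈ coneD) : 0 ≤ τ.flux y x :=
  mul_nonneg (inv_nonneg.2 (Complex.normSq_nonneg _))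
    (dotProduct_mulVec_nonneg_of_mem_coneD hx (mink_l_l _).ge)

lemma flux_pos (y : Vec4) {x : Mat4} (hx : Generic x) : 0 < τ.flux y x :=
  mul_pos (inv_pos.2 (Complex.normSq_pos.2 (τ.scale_ne_zero y)))
    (hx.dotProduct_mulVec_pos (mink_l_l _).ge (l_ne_zero _))

lemma flux_zero (y : Vec4) : τ.flux y 0 = 0 := by simp [flux]

lemma continuous_flux {X : Type*} [TopologicalSpace X] {y : X → Vec4} {x : X → Mat4}
    (hy : Continuous y) (hx : Continuous x) : Continuous fun q => τ.flux (y q) (x q) := by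
  have hl : Continuous fun b => (τ.nullRotation b).l := by
    simp only [nullRotation, Complex.normSq_apply]
    fun_prop
  have hk : Continuous fun q => (τ.nullRotation (τ.slope (y q))).l :=
    hl.comp ((τ.contDiff_slope (k := 0)).continuous.comp hy)
  have hscale : Continuous fun q => normSq (τ.scale (y q)) := by
    unfold scale
    fun_prop
  exact (hscale.inv₀ fun q => Complex.normSq_eq_zero.not.2 (τ.scale_ne_zero _)).mul
    (hk.dotProduct (hx.matrix_mulVec hk))

end NullFrame

theorem maxwell_tracks_null_geodesics_general {p u : Vec4} (hu₀ : u ≠ 0) (hu : mink u u = 0)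
    {x : Vec4 → Mat4} (hx : Continuous x) (hxc : HasCompactSupport x)
    {O : Set Vec4} (hO : IsOpen O) (hγO : ∀ t : ℝ, p + t • u ∈ O) (hxO : ∀ q ∈ O, x q ∈ coneD)
    {t₀ : ℝ} (ht₀ : Generic (x (p + t₀ • u))) :
    ∃ T ∈ maxwellC, 0 < ∫ q, minner (T q) (x q) := by
  obtain ⟨τ, hτ⟩ := NullFrame.exists_phase_sub_eq_zero_iff p hu₀ hu
  have hphase : Continuous fun q => τ.phase (q - p) :=
    (τ.contDiff_phase (k := 0)).continuous.comp (continuous_sub_right p)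
  obtain ⟨C, hC⟩ := hxc.isCompact.bddAbove_image
    (Complex.continuous_im.comp hphase).continuousOn
  have hdecay : ∀ q ∈ tsupport x \ O, 0 < decayRate (C + 1) (τ.phase (q - p)) := fun q hq =>
    decayRate_pos (fun hq₀ => let ⟨t, ht⟩ := (hτ q).1 hq₀; hq.2 (ht ▸ hγO t))
      (τ.phase_im_nonneg _) ((hC (Set.mem_image_of_mem _ hq.1)).trans_lt (lt_add_one C))
  have hsupport : Function.support (fun q => τ.flux (q - p) (x q)) ⊆ Function.support x :=
    Function.support_subset_iff'.2 fun q hq => by rw [Function.notMem_support.1 hq, τ.flux_zero]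
  obtain ⟨n, hn⟩ := exists_nat_integral_exp_neg_mul_pos (μ := volume)
    (Q := fun q => decayRate (C + 1) (τ.phase (q - p)))
    ((continuous_decayRate _).comp hphase) (τ.continuous_flux (continuous_sub_right p) hx)
    (hxc.mono hsupport) hO (fun q hq => τ.flux_nonneg _ (hxO q hq))
    (fun q hq => hdecay q ⟨closure_mono hsupport hq.1, hq.2⟩)
    (by rw [(hτ _).2 ⟨t₀, rfl⟩, decayRate_zero]) (τ.flux_pos _ ht₀)
  refine ⟨_, τ.maxwellT_beam_sub_mem_maxwellC (differentiable_gaussian (C + 1) n) p, ?_⟩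
  simpa only [NullFrame.minner_maxwellT_beam, normSq_gaussian] using hn

/-- Source-free Maxwell fields track null geodesics. -/
theorem maxwell_tracks_null_geodesics (p : Vec4) (u : Vec4) (hu : FutureNull u) :
    Tracks maxwellC (fun t => p + t • u) := by
  rintro x hx hxc - ⟨O, hO, hγO, hxO⟩ ⟨t₀, ht₀⟩
  exact maxwell_tracks_null_geodesics_general hu.1 hu.2.1
    (continuous_matrix fun i j => (hx i j).continuous) hxc hO
    (fun t => hγO (Set.mem_range_self t)) hxO ht₀
end
end

section
/- Source-free Maxwell fields track no timelike geodesics (flat-space version): let 𝒞 be the collection of stress-energy tensors T[F] of all smooth fields F : ℝ⁴ → Matrix (Fin 4) (Fin 4) ℝ with antisymmetric values solving the source-free Maxwell equations. Then for every p ∈ ℝ⁴ and every unit timelike u ∈ ℝ⁴, the collection 𝒞 does NOT track the timelike geodesic γ : t ↦ p + t • u. -/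
open Matrix MeasureTheory Filter Topology

noncomputable section

/-!
The stress-energy tensor of a source-free Maxwell field is symmetric, trace-free and conserved, so
after an integration by parts it annihilates every compactly supported test field
`f ηᵃᵇ + ∂⁽ᵃ vᵇ⁾`. Tracking fails because such a test field can satisfy the energy condition near
a timelike geodesic with tangent `u`. With `s` the proper time and `ρ` a quadratic form vanishing to
second order on the geodesic, a suitable `v` gives
`φ(s) ηᵃᵇ + ∂⁽ᵃ vᵇ⁾ = (φ(s) + Ψ'(s) + φ''(s) ρ / 2) uᵃ uᵇ`. A gradient contributes only `Ψ'`, whose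
integral is zero; the trace term contributes the positive mass `∫ φ`. Choosing `φ + Ψ'` nonnegative
and equal to one on the support of `φ` makes the coefficient nonnegative for small `ρ`, and a
cutoff outside a large ball makes the field compactly supported without changing it there.
-/

open scoped ContDiff

/-! ### Partial derivatives -/

lemma pd_eq_of_hasFDerivAt {f : Vec4 → ℝ} {f' : Vec4 →L[ℝ] ℝ} {q : Vec4}
    (h : HasFDerivAt f f' q) (a : Fin 4) : pd a f q = f' (Pi.single a 1) := by
  rw [pd, h.fderiv]

lemma pd_congr {f g : Vec4 → ℝ} {q : Vec4} (h : f =ᶠ[𝓝 q] g) (a : Fin 4) :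
    pd a f q = pd a g q := by
  rw [pd, pd, h.fderiv_eq]

lemma contDiff_pd {n : ℕ∞ω} {f : Vec4 → ℝ} (hf : ContDiff ℝ (n + 1) f) (a : Fin 4) :
    ContDiff ℝ n (pd a f) :=
  (hf.fderiv_right le_rfl).clm_apply contDiff_const

lemma continuous_pd {f : Vec4 → ℝ} (hf : ContDiff ℝ 1 f) (a : Fin 4) : Continuous (pd a f) :=
  (contDiff_pd (n := 0) (by simpa using hf) a).continuous

lemma hasCompactSupport_pd {f : Vec4 → ℝ} (hf : HasCompactSupport f) (a : Fin 4) :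
    HasCompactSupport (pd a f) :=
  hf.fderiv_apply (𝕜 := ℝ) (Pi.single a 1)

lemma integrable_mul_pd {g f : Vec4 → ℝ} (hg : Continuous g) (hf : ContDiff ℝ 1 f)
    (hfc : HasCompactSupport f) (a : Fin 4) : Integrable fun q => g q * pd a f q :=
  (hg.mul (continuous_pd hf a)).integrable_of_hasCompactSupport
    (hasCompactSupport_pd hfc a).mul_left

lemma integrable_pd_mul {g f : Vec4 → ℝ} (hg : ContDiff ℝ 1 g) (hf : Continuous f)
    (hfc : HasCompactSupport f) (a : Fin 4) : Integrable fun q => pd a g q * f q :=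
  ((continuous_pd hg a).mul hf).integrable_of_hasCompactSupport hfc.mul_left

lemma integral_mul_pd {g f : Vec4 → ℝ} (hg : ContDiff ℝ 1 g) (hf : ContDiff ℝ 1 f)
    (hfc : HasCompactSupport f) (a : Fin 4) :
    ∫ q, g q * pd a f q = -∫ q, pd a g q * f q :=
  integral_mul_fderiv_eq_neg_fderiv_mul_of_integrable
    (integrable_pd_mul hg hf.continuous hfc a) (integrable_mul_pd hg.continuous hf hfc a)
    ((hg.continuous.mul hf.continuous).integrable_of_hasCompactSupport hfc.mul_left)
    (fun q _ => hg.differentiable one_ne_zero q) (fun q _ => hf.differentiable one_ne_zero q)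

/-! ### Trace-free conserved fields -/

lemma E_transpose : Eᵀ = E :=
  diagonal_transpose _

lemma E_comm (a b : Fin 4) : E a b = E b a :=
  congr_fun₂ E_transpose b a

lemma E_eq_diag_mul_single (a b : Fin 4) : E a b = E a a * Pi.single (M := fun _ => ℝ) a 1 b := by
  rw [E, diagonal_apply_eq, diagonal_apply, Pi.single_apply]
  simp only [eq_comm, mul_ite, mul_one, mul_zero]

lemma sum_E_mul (a : Fin 4) (X : Fin 4 → ℝ) : ∑ b, E a b * X b = E a a * X a := by
  rw [Finset.sum_eq_single a (fun b _ hb => by simp [E_eq_diag_mul_single a b, hb]) (by simp)]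

lemma E_diag_mul_self (a : Fin 4) : E a a * E a a = 1 := by
  fin_cases a <;> simp [E]

lemma E_mul_apply (A : Mat4) (a b : Fin 4) : (E * A) a b = E a a * A a b := by
  rw [E, diagonal_mul, diagonal_apply_eq]

lemma mul_E_apply (A : Mat4) (a b : Fin 4) : (A * E) a b = A a b * E b b := by
  rw [E, mul_diagonal, diagonal_apply_eq]

lemma trace_E_mul_E : (E * E).trace = 4 := by
  simp [trace, E_mul_apply, E_diag_mul_self]

lemma minner_add (T x y : Mat4) : minner T (x + y) = minner T x + minner T y := by
  simp only [minner, Matrix.add_apply, mul_add, Finset.sum_add_distrib]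

lemma minner_smul (c : ℝ) (T x : Mat4) : minner T (c • x) = c * minner T x := by
  simp only [minner, Matrix.smul_apply, smul_eq_mul, Finset.mul_sum, mul_left_comm c]

lemma minner_transpose (T x : Mat4) : minner T xᵀ = minner Tᵀ x :=
  Finset.sum_comm

lemma minner_E (T : Mat4) : minner T E = (E * T).trace := by
  refine Finset.sum_congr rfl fun a _ => ?_
  rw [diag_apply, E_mul_apply, ← sum_E_mul]
  simp only [mul_comm]

/-- The divergence `∂ᵃ T_{ab}` of a tensor field with lower indices; the index of the derivative is
raised with `E`, in contrast to `DivFree`. -/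
def minkDiv (T : Vec4 → Mat4) (q : Vec4) (b : Fin 4) : ℝ :=
  ∑ a, E a a * pd a (fun y => T y a b) q

/-- The properties of the stress-energy tensor of a Maxwell field that obstruct tracking:
continuous differentiability, symmetry, vanishing trace, and conservation. -/
structure IsTraceFreeConserved (T : Vec4 → Mat4) : Prop where
  contDiff : ∀ a b, ContDiff ℝ 1 fun q => T q a b
  symValued : SymValued T
  minner_E_eq_zero : ∀ q, minner (T q) E = 0
  minkDiv_eq_zero : ∀ q b, minkDiv T q b = 0

/-- The gradient `∂ᵃ vᵇ` of a vector field, with the index of the derivative raised. -/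
def raisedGrad (v : Vec4 → Vec4) (q : Vec4) : Mat4 :=
  Matrix.of fun a b => E a a * pd a (fun y => v y b) q

/-- The field `f ηᵃᵇ + ∂⁽ᵃ vᵇ⁾`, used as a test field that every trace-free conserved tensor
annihilates: the first term sees only the trace and the second only the divergence. -/
def traceAddSymGrad (f : Vec4 → ℝ) (v : Vec4 → Vec4) (q : Vec4) : Mat4 :=
  f q • E + (1 / 2 : ℝ) • (raisedGrad v q + (raisedGrad v q)ᵀ)

lemma minner_traceAddSymGrad {T : Mat4} (hT : Tᵀ = T) (htr : minner T E = 0) (f : Vec4 → ℝ)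
    (v : Vec4 → Vec4) (q : Vec4) :
    minner T (traceAddSymGrad f v q) = minner T (raisedGrad v q) := by
  rw [traceAddSymGrad, minner_add, minner_smul, minner_smul, minner_add, minner_transpose, hT, htr]
  ring

lemma integral_minner_raisedGrad {T : Vec4 → Mat4} (hT : ∀ a b, ContDiff ℝ 1 fun q => T q a b)
    {v : Vec4 → Vec4} (hv : ContDiff ℝ 1 v) (hvc : HasCompactSupport v) :
    ∫ q, minner (T q) (raisedGrad v q) = -∫ q, ∑ b, minkDiv T q b * v q b := by
  have hvb : ∀ b, ContDiff ℝ 1 fun q => v q b := contDiff_pi.1 hv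
  have hvcb : ∀ b, HasCompactSupport fun q => v q b := fun b =>
    hvc.comp_left (g := fun x : Vec4 => x b) rfl
  have hint : ∀ a b, Integrable fun q => E a a * (T q a b * pd a (fun y => v y b) q) := fun a b =>
    (integrable_mul_pd (hT a b).continuous (hvb b) (hvcb b) a).const_mul _
  have hint' : ∀ a b, Integrable fun q => E a a * (pd a (fun y => T y a b) q * v q b) := fun a b =>
    (integrable_pd_mul (hT a b) (hvb b).continuous (hvcb b) a).const_mul _
  calc ∫ q, minner (T q) (raisedGrad v q)
      = ∫ q, ∑ a, ∑ b, E a a * (T q a b * pd a (fun y => v y b) q) := by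
        simp only [minner, raisedGrad, of_apply, mul_left_comm]
    _ = ∑ a, ∑ b, E a a * ∫ q, T q a b * pd a (fun y => v y b) q := by
        rw [integral_finsetSum _ fun a _ => integrable_finsetSum _ fun b _ => hint a b]
        simp only [integral_finsetSum _ fun b _ => hint _ b, integral_const_mul]
    _ = -∑ b, ∑ a, E a a * ∫ q, pd a (fun y => T y a b) q * v q b := by
        simp only [integral_mul_pd (hT _ _) (hvb _) (hvcb _), mul_neg, Finset.sum_neg_distrib]
        rw [Finset.sum_comm]
    _ = -∫ q, ∑ b, ∑ a, E a a * (pd a (fun y => T y a b) q * v q b) := by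
        rw [integral_finsetSum _ fun b _ => integrable_finsetSum _ fun a _ => hint' a b]
        simp only [integral_finsetSum _ fun a _ => hint' a _, integral_const_mul]
    _ = -∫ q, ∑ b, minkDiv T q b * v q b := by
        simp only [minkDiv, Finset.sum_mul, mul_assoc]

lemma IsTraceFreeConserved.integral_minner_eq_zero {T : Vec4 → Mat4} (hT : IsTraceFreeConserved T)
    (f : Vec4 → ℝ) {v : Vec4 → Vec4} (hv : ContDiff ℝ 1 v) (hvc : HasCompactSupport v) :
    ∫ q, minner (T q) (traceAddSymGrad f v q) = 0 := by
  simp only [minner_traceAddSymGrad (hT.symValued _) (hT.minner_E_eq_zero _),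
    integral_minner_raisedGrad hT.contDiff hv hvc, hT.minkDiv_eq_zero, zero_mul,
    Finset.sum_const_zero, integral_zero, neg_zero]

/-! ### Maxwell fields -/

lemma maxwellT_apply (F : Mat4) (a b : Fin 4) :
    maxwellT F a b = ∑ c, E c c * (F a c * F c b)
      - (1 / 4 : ℝ) * E a b * ∑ c, ∑ d, E c c * E d d * (F c d * F d c) := by
  have hFEF : (F * E * F) a b = ∑ c, E c c * (F a c * F c b) := by
    simp only [mul_apply (N := F), mul_E_apply, mul_right_comm, mul_comm (E _ _)]
  have htrace : (E * F * E * F).trace = ∑ c, ∑ d, E c c * E d d * (F c d * F d c) := by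
    refine Finset.sum_congr rfl fun c _ => ?_
    rw [diag_apply, mul_apply]
    simp only [mul_E_apply, E_mul_apply]
    exact Finset.sum_congr rfl fun d _ => by ring
  rw [maxwellT, Matrix.sub_apply, Matrix.smul_apply, hFEF, htrace, smul_eq_mul, mul_right_comm]

lemma maxwellT_transpose {F : Mat4} (hF : Fᵀ = -F) : (maxwellT F)ᵀ = maxwellT F := by
  simp [maxwellT, transpose_mul, hF, E_transpose, Matrix.mul_assoc]

lemma minner_maxwellT_E (F : Mat4) : minner (maxwellT F) E = 0 := by
  rw [minner_E, maxwellT, Matrix.mul_sub, Matrix.mul_smul, trace_sub, trace_smul, trace_E_mul_E,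
    ← Matrix.mul_assoc, ← Matrix.mul_assoc, smul_eq_mul]
  ring

lemma contDiff_maxwellT {n : ℕ∞ω} {F : Vec4 → Mat4} (hF : ∀ a b, ContDiff ℝ n fun q => F q a b)
    (a b : Fin 4) : ContDiff ℝ n fun q => maxwellT (F q) a b := by
  simp only [maxwellT_apply]
  fun_prop

lemma pd_maxwellT {F : Vec4 → Mat4} {q : Vec4}
    (hF : ∀ a b, DifferentiableAt ℝ (fun y => F y a b) q) (i a b : Fin 4) :
    pd i (fun y => maxwellT (F y) a b) q =
      ∑ c, E c c * (pd i (fun y => F y a c) q * F q c b + F q a c * pd i (fun y => F y c b) q)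
      - (1 / 4 : ℝ) * E a b * ∑ c, ∑ d, E c c * E d d *
        (pd i (fun y => F y c d) q * F q d c + F q c d * pd i (fun y => F y d c) q) := by
  have hFF : ∀ a b c d (k : ℝ), HasFDerivAt (fun y => k * (F y a b * F y c d)) _ q :=
    fun a b c d k => ((hF a b).hasFDerivAt.mul (hF c d).hasFDerivAt).const_mul k
  have hT := (HasFDerivAt.fun_sum (u := Finset.univ) fun c _ => hFF a c c b (E c c)).fun_sub
    ((HasFDerivAt.fun_sum (u := Finset.univ) fun c _ =>
      HasFDerivAt.fun_sum (u := Finset.univ) fun d _ =>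
        hFF c d d c (E c c * E d d)).const_mul (1 / 4 * E a b))
  simp only [maxwellT_apply]
  rw [pd_eq_of_hasFDerivAt hT]
  simp only [pd, _root_.sub_apply, _root_.sum_apply,
    _root_.smul_apply, _root_.add_apply, smul_eq_mul, add_comm, mul_comm]

lemma sum_mul_of_antisymm {ι : Type*} [Fintype ι] {W : ι → ι → ℝ} (hW : ∀ a c, W a c = -W c a)
    (X : ι → ι → ℝ) :
    ∑ a, ∑ c, W a c * X a c = (1 / 2 : ℝ) * ∑ a, ∑ c, W a c * (X a c - X c a) := by
  have hswap : ∑ a, ∑ c, W a c * X c a = -∑ a, ∑ c, W a c * X a c := by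
    rw [Finset.sum_comm]
    simp only [← Finset.sum_neg_distrib, ← neg_mul, ← hW]
  simp only [mul_sub, Finset.sum_sub_distrib, hswap]
  ring

lemma minkDiv_maxwellT {F : Vec4 → Mat4} {q : Vec4}
    (hF : ∀ a b, DifferentiableAt ℝ (fun y => F y a b) q) (b : Fin 4) :
    minkDiv (fun y => maxwellT (F y)) q b =
      ∑ c, E c c * (minkDiv F q c * F q c b)
      + ∑ a, ∑ c, E a a * E c c * F q a c *
        (pd a (fun y => F y c b) q - (1 / 2 : ℝ) * pd b (fun y => F y c a) q) := by
  have hsource : ∑ c, E c c * (minkDiv F q c * F q c b) =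
      ∑ a, ∑ c, E a a * (E c c * (pd a (fun y => F y a c) q * F q c b)) := by
    simp only [minkDiv, Finset.sum_mul, Finset.mul_sum]
    rw [Finset.sum_comm]
    exact Finset.sum_congr rfl fun a _ => Finset.sum_congr rfl fun c _ => by ring
  have hinvariant : ∑ c, ∑ d, E c c * E d d *
      (pd b (fun y => F y c d) q * F q d c + F q c d * pd b (fun y => F y d c) q) =
      2 * ∑ c, ∑ d, E c c * E d d * (F q c d * pd b (fun y => F y d c) q) := by
    simp only [mul_add, Finset.sum_add_distrib, two_mul]
    congr 1
    rw [Finset.sum_comm]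
    exact Finset.sum_congr rfl fun c _ => Finset.sum_congr rfl fun d _ => by ring
  have hcontract : ∀ X : Fin 4 → ℝ, ∑ a, E a a * (1 / 4 * E a b * X a) = 1 / 4 * X b := fun X => by
    have h := sum_E_mul b fun a => E a a * X a
    rw [← mul_assoc, E_diag_mul_self, one_mul] at h
    rw [← h, Finset.mul_sum]
    refine Finset.sum_congr rfl fun a _ => ?_
    rw [E_comm a b]
    ring
  rw [hsource]
  simp only [minkDiv, pd_maxwellT hF, mul_sub, Finset.sum_sub_distrib]
  rw [hcontract, hinvariant]
  simp only [mul_add, Finset.mul_sum, Finset.sum_add_distrib, add_sub_assoc]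
  congr 2
  · exact Finset.sum_congr rfl fun a _ => Finset.sum_congr rfl fun c _ => by ring
  · exact Finset.sum_congr rfl fun c _ => Finset.sum_congr rfl fun d _ => by ring

lemma pd_neg_comm_of_antisymm {F : Vec4 → Mat4} (hF : ∀ q, (F q)ᵀ = -F q) (k i j : Fin 4)
    (q : Vec4) : pd k (fun y => F y i j) q = -pd k (fun y => F y j i) q := by
  have hneg : (fun y => F y i j) = -fun y => F y j i :=
    funext fun y => congr_fun₂ (hF y) j i
  rw [hneg, pd, fderiv_neg, _root_.neg_apply, pd]

lemma SolvesMaxwell.minkDiv_maxwellT_eq_zero {F : Vec4 → Mat4}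
    (hF : ∀ a b, Differentiable ℝ fun q => F q a b) (hanti : ∀ q, (F q)ᵀ = -F q)
    (hM : SolvesMaxwell F) (q : Vec4) (b : Fin 4) :
    minkDiv (fun y => maxwellT (F y)) q b = 0 := by
  have hsource : ∀ c, minkDiv F q c = 0 := hM.1 q
  have hW : ∀ a c, E a a * E c c * F q a c = -(E c c * E a a * F q c a) := fun a c => by
    rw [show F q a c = -F q c a from congr_fun₂ (hanti q) c a]
    ring
  have hcyclic : ∀ a c,
      (pd a (fun y => F y c b) q - (1 / 2 : ℝ) * pd b (fun y => F y c a) q)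
        - (pd c (fun y => F y a b) q - (1 / 2 : ℝ) * pd b (fun y => F y a c) q) = 0 := fun a c => by
    rw [pd_neg_comm_of_antisymm hanti b c a, pd_neg_comm_of_antisymm hanti c a b]
    linear_combination hM.2 q a c b
  rw [minkDiv_maxwellT (fun a b => hF a b q), sum_mul_of_antisymm hW]
  simp only [hsource, hcyclic, zero_mul, mul_zero, Finset.sum_const_zero, add_zero]

lemma isTraceFreeConserved_of_mem_maxwellC {T : Vec4 → Mat4} (hT : T ∈ maxwellC) :
    IsTraceFreeConserved T := by
  obtain ⟨F, hF, hanti, hM, rfl⟩ := hT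
  exact
    { contDiff := contDiff_maxwellT fun a b => (hF a b).of_le (by simp)
      symValued := fun q => maxwellT_transpose (hanti q)
      minner_E_eq_zero := fun q => minner_maxwellT_E (F q)
      minkDiv_eq_zero :=
        hM.minkDiv_maxwellT_eq_zero (fun a b => (hF a b).differentiable (by simp)) hanti }

/-! ### The cone `D` and its interior -/

/-- The symmetrized product `ξ⁽ᵃ ζᵇ⁾`, the generators of `coneD`. -/
def symProd (ξ ζ : Vec4) : Mat4 := (1 / 2 : ℝ) • (vecMulVec ξ ζ + vecMulVec ζ ξ)

lemma symProd_self (ξ : Vec4) : symProd ξ ξ = vecMulVec ξ ξ := by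
  rw [symProd, ← two_smul ℝ, smul_smul]
  norm_num

lemma symProd_mem_coneD {ξ ζ : Vec4} (hξ : FutureCausal ξ) (hζ : FutureCausal ζ) :
    symProd ξ ζ ∈ coneD :=
  ⟨1, fun _ => ξ, fun _ => ζ, fun _ => hξ, fun _ => hζ, by simp [symProd]⟩

lemma symProd_smul_smul (c d : ℝ) (ξ ζ : Vec4) :
    symProd (c • ξ) (d • ζ) = (c * d) • symProd ξ ζ := by
  simp only [symProd, smul_vecMulVec, vecMulVec_smul]
  module

lemma zero_mem_coneD : (0 : Mat4) ∈ coneD :=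
  ⟨0, Fin.elim0, Fin.elim0, fun k => k.elim0, fun k => k.elim0, by simp⟩

lemma add_mem_coneD {x y : Mat4} (hx : x ∈ coneD) (hy : y ∈ coneD) : x + y ∈ coneD := by
  obtain ⟨n, ξ, ζ, hξ, hζ, rfl⟩ := hx
  obtain ⟨m, ξ', ζ', hξ', hζ', rfl⟩ := hy
  refine ⟨n + m, Fin.append ξ ξ', Fin.append ζ ζ', fun k => ?_, fun k => ?_, ?_⟩
  · refine Fin.addCases (fun i => ?_) (fun i => ?_) k <;> simp [hξ, hξ']
  · refine Fin.addCases (fun i => ?_) (fun i => ?_) k <;> simp [hζ, hζ']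
  · simp [Fin.sum_univ_add]

lemma FutureCausal.smul {x : Vec4} (hx : FutureCausal x) {c : ℝ} (hc : 0 ≤ c) :
    FutureCausal (c • x) := by
  refine ⟨?_, mul_nonneg hc hx.2⟩
  have hquad : mink (c • x) (c • x) = c ^ 2 * mink x x := by
    simp only [mink, Pi.smul_apply, smul_eq_mul]
    ring
  rw [hquad]
  exact mul_nonneg (sq_nonneg c) hx.1

lemma smul_mem_coneD {x : Mat4} (hx : x ∈ coneD) {c : ℝ} (hc : 0 ≤ c) : c • x ∈ coneD := by
  obtain ⟨n, ξ, ζ, hξ, hζ, rfl⟩ := hx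
  refine ⟨n, fun k => c • ξ k, ζ, fun k => (hξ k).smul hc, hζ, ?_⟩
  simp only [Finset.smul_sum, smul_add, smul_vecMulVec, vecMulVec_smul, smul_comm c (1 / 2 : ℝ)]

lemma sum_mem_coneD {ι : Type*} (s : Finset ι) {x : ι → Mat4} (hx : ∀ i ∈ s, x i ∈ coneD) :
    ∑ i ∈ s, x i ∈ coneD :=
  Finset.sum_induction x (· ∈ coneD) (fun _ _ => add_mem_coneD) zero_mem_coneD hx

lemma smul_vecMulVec_self_mem_coneD {u : Vec4} (hu : FutureCausal u) {c : ℝ} (hc : 0 ≤ c) :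
    c • vecMulVec u u ∈ coneD := by
  rw [← symProd_self]
  exact smul_mem_coneD (symProd_mem_coneD hu hu) hc

lemma vecMulVec_self_add_symProd_mem_coneD {u ξ ζ : Vec4} (hξ : FutureCausal (u + ξ))
    (hξ' : FutureCausal (u - ξ)) (hζ : FutureCausal (u + ζ)) (hζ' : FutureCausal (u - ζ)) :
    vecMulVec u u + symProd ξ ζ ∈ coneD := by
  have hpolar : vecMulVec u u + symProd ξ ζ =
      (1 / 2 : ℝ) • (symProd (u + ξ) (u + ζ) + symProd (u - ξ) (u - ζ)) := by
    simp only [symProd, vecMulVec_add, add_vecMulVec, vecMulVec_sub, sub_vecMulVec]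
    module
  rw [hpolar]
  exact smul_mem_coneD (add_mem_coneD (symProd_mem_coneD hξ hζ) (symProd_mem_coneD hξ' hζ'))
    (by norm_num)

lemma eq_sum_smul_symProd_single {A : Mat4} (hA : Aᵀ = A) :
    A = ∑ a, ∑ b, A a b • symProd (Pi.single a 1) (Pi.single b 1) := by
  have hexpand : A = ∑ a, ∑ b, A a b • vecMulVec (Pi.single a 1) (Pi.single b 1) := by
    simpa only [← single_eq_single_vecMulVec_single, smul_single, smul_eq_mul, mul_one] using
      matrix_eq_sum_single A
  have hexpand' : A = ∑ a, ∑ b, A a b • vecMulVec (Pi.single b 1) (Pi.single a 1) := by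
    conv_lhs => rw [hexpand, Finset.sum_comm, ← hA]
    rfl
  have haverage : A = (1 / 2 : ℝ) • (A + A) := by module
  simp only [symProd, smul_comm _ (1 / 2 : ℝ), smul_add, Finset.sum_add_distrib]
  simp only [← Finset.smul_sum]
  rw [← hexpand, ← hexpand', ← smul_add, ← haverage]

lemma continuous_mink {X : Type*} [TopologicalSpace X] {f g : X → Vec4} (hf : Continuous f)
    (hg : Continuous g) : Continuous fun x => mink (f x) (g x) := by
  unfold mink
  fun_prop

lemma isOpen_futureTimelike : IsOpen {x : Vec4 | FutureTimelike x} :=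
  (isOpen_lt continuous_const (continuous_mink continuous_id continuous_id)).inter
    (isOpen_lt continuous_const (continuous_apply 0))

lemma FutureTimelike.futureCausal {x : Vec4} (hx : FutureTimelike x) : FutureCausal x :=
  ⟨hx.1.le, hx.2.le⟩

lemma FutureTimelike.exists_futureCausal_add {u : Vec4} (hu : FutureTimelike u) :
    ∃ r > 0, ∀ x : Vec4, ‖x‖ ≤ r → FutureCausal (u + x) := by
  obtain ⟨r, hr, hball⟩ := Metric.nhds_basis_closedBall.mem_iff.1
    (isOpen_futureTimelike.mem_nhds hu)
  exact ⟨r, hr, fun x hx => FutureTimelike.futureCausal <| hball <| by simpa using hx⟩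

lemma norm_smul_single_one (c : ℝ) (a : Fin 4) : ‖c • (Pi.single a 1 : Vec4)‖ = |c| := by
  rw [norm_smul, Pi.norm_single, norm_one, mul_one, Real.norm_eq_abs]

-- Each of the 16 components of the perturbation along the `e_a e_b` is absorbed by its own share
-- `u uᵀ / 16`.
lemma mem_coneD_of_abs_sub_le {u : Vec4} {r : ℝ} (hr : 0 < r)
    (hu : ∀ x : Vec4, ‖x‖ ≤ r → FutureCausal (u + x)) {A : Mat4} (hA : Aᵀ = A)
    (hclose : ∀ a b, |16 * (A a b - u a * u b)| ≤ r ^ 2) : A ∈ coneD := by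
  set S := A - vecMulVec u u with hS
  have hST : Sᵀ = S := by rw [hS, transpose_sub, hA, transpose_vecMulVec]
  have hu' : ∀ x : Vec4, ‖x‖ ≤ r → FutureCausal (u - x) := fun x hx => by
    simpa only [sub_eq_add_neg] using hu (-x) (by rwa [norm_neg])
  have hcomponent : ∀ a b, vecMulVec u u +
      (16 * S a b) • symProd (Pi.single a 1) (Pi.single b 1) ∈ coneD := fun a b => by
    have hfactor : (16 * S a b) • symProd (Pi.single a 1) (Pi.single b 1) =
        symProd (r • Pi.single a 1) ((16 * S a b / r) • Pi.single b 1) := by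
      rw [symProd_smul_smul, mul_div_cancel₀ _ hr.ne']
    have hnorm : ‖r • (Pi.single a 1 : Vec4)‖ ≤ r := by
      rw [norm_smul_single_one, abs_of_pos hr]
    have hnorm' : ‖(16 * S a b / r) • (Pi.single b 1 : Vec4)‖ ≤ r := by
      rw [norm_smul_single_one, abs_div, abs_of_pos hr, div_le_iff₀ hr, ← sq]
      exact hclose a b
    rw [hfactor]
    exact vecMulVec_self_add_symProd_mem_coneD (hu _ hnorm) (hu' _ hnorm) (hu _ hnorm')
      (hu' _ hnorm')
  have haverage : A = (1 / 16 : ℝ) • ∑ a, ∑ b, (vecMulVec u u +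
      (16 * S a b) • symProd (Pi.single a 1) (Pi.single b 1)) := by
    simp only [Finset.sum_add_distrib, mul_smul, ← Finset.smul_sum]
    rw [← eq_sum_smul_symProd_single hST, hS]
    simp only [Finset.sum_const, Finset.card_univ, Fintype.card_fin]
    module
  rw [haverage]
  exact smul_mem_coneD
    (sum_mem_coneD _ fun a _ => sum_mem_coneD _ fun b _ => hcomponent a b) (by norm_num)

lemma FutureTimelike.generic_vecMulVec_self {u : Vec4} (hu : FutureTimelike u) :
    Generic (vecMulVec u u) := by
  obtain ⟨r, hr, hcausal⟩ := hu.exists_futureCausal_add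
  refine ⟨transpose_vecMulVec u u, mem_interior_iff_mem_nhds.2 ?_⟩
  have hclose : ∀ᶠ A : {A : Mat4 // Aᵀ = A} in 𝓝 ⟨vecMulVec u u, transpose_vecMulVec u u⟩,
      ∀ a b, |16 * (A.val a b - u a * u b)| < r ^ 2 :=
    eventually_all.2 fun a => eventually_all.2 fun b => by
      have hentry : Continuous fun A : {A : Mat4 // Aᵀ = A} => A.val a b :=
        continuous_subtype_val.matrix_elem a b
      have hcont : Continuous fun A : {A : Mat4 // Aᵀ = A} => |16 * (A.val a b - u a * u b)| := by
        exact (continuous_const.mul (hentry.sub continuous_const)).abs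
      exact hcont.continuousAt.eventually_lt_const (by simp [vecMulVec_apply, hr])
  filter_upwards [hclose] with A hA
  exact mem_coneD_of_abs_sub_le hr hcausal A.property fun a b => (hA a b).le

/-! ### Test fields from potentials -/

lemma raisedGrad_congr {v w : Vec4 → Vec4} {q : Vec4} (h : v =ᶠ[𝓝 q] w) :
    raisedGrad v q = raisedGrad w q := by
  ext a b
  exact congrArg (E a a * ·) (pd_congr (h.fun_comp fun x : Vec4 => x b) a)

lemma raisedGrad_eq_of_hasFDerivAt {v : Vec4 → Vec4} {v' : Vec4 →L[ℝ] Vec4} {q : Vec4}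
    (h : HasFDerivAt v v' q) :
    raisedGrad v q = Matrix.of fun a b => E a a * v' (Pi.single a 1) b := by
  ext a b
  rw [raisedGrad, of_apply, of_apply, pd_eq_of_hasFDerivAt (hasFDerivAt_pi'.1 h b)]
  rfl

lemma traceAddSymGrad_congr {f g : Vec4 → ℝ} {v w : Vec4 → Vec4} {q : Vec4} (hf : f q = g q)
    (hv : v =ᶠ[𝓝 q] w) : traceAddSymGrad f v q = traceAddSymGrad g w q := by
  rw [traceAddSymGrad, traceAddSymGrad, hf, raisedGrad_congr hv]

lemma traceAddSymGrad_eq_zero {f : Vec4 → ℝ} {v : Vec4 → Vec4} {q : Vec4} (hf : f q = 0)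
    (hv : v =ᶠ[𝓝 q] 0) : traceAddSymGrad f v q = 0 := by
  rw [traceAddSymGrad, hf, raisedGrad_congr hv,
    raisedGrad_eq_of_hasFDerivAt (v := 0) (hasFDerivAt_const 0 q)]
  ext a b
  simp

lemma traceAddSymGrad_mul_of_eventuallyEq_one {χ : Vec4 → ℝ} {q : Vec4} (hχ : χ =ᶠ[𝓝 q] 1)
    (f : Vec4 → ℝ) (v : Vec4 → Vec4) :
    traceAddSymGrad (χ * f) (χ • v) q = traceAddSymGrad f v q := by
  refine traceAddSymGrad_congr (by simp [hχ.eq_of_nhds]) ?_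
  filter_upwards [hχ] with y hy
  simp [hy]

lemma smoothMatField_traceAddSymGrad {f : Vec4 → ℝ} {v : Vec4 → Vec4} (hf : ContDiff ℝ ∞ f)
    (hv : ContDiff ℝ ∞ v) : SmoothMatField (traceAddSymGrad f v) := fun a b => by
  have hpd : ∀ i j, ContDiff ℝ ∞ (pd i fun y => v y j) := fun i j =>
    contDiff_pd (contDiff_pi.1 hv j) i
  exact (hf.mul contDiff_const).add
    (contDiff_const.mul ((contDiff_const.mul (hpd a b)).add (contDiff_const.mul (hpd b a))))

lemma symValued_traceAddSymGrad (f : Vec4 → ℝ) (v : Vec4 → Vec4) :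
    SymValued (traceAddSymGrad f v) := fun q => by
  simp only [traceAddSymGrad, transpose_add, transpose_smul, transpose_transpose, E_transpose,
    add_comm]

lemma hasCompactSupport_traceAddSymGrad {f : Vec4 → ℝ} {v : Vec4 → Vec4}
    (hf : HasCompactSupport f) (hv : HasCompactSupport v) :
    HasCompactSupport (traceAddSymGrad f v) := by
  refine HasCompactSupport.intro (hf.isCompact.union hv.isCompact) fun q hq => ?_
  rw [Set.mem_union, not_or] at hq
  exact traceAddSymGrad_eq_zero (image_eq_zero_of_notMem_tsupport hq.1)
    (notMem_tsupport_iff_eventuallyEq.1 hq.2)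

lemma not_tracks_of_traceAddSymGrad {C : Set (Vec4 → Mat4)}
    (hC : ∀ T ∈ C, IsTraceFreeConserved T) {f : Vec4 → ℝ} {v : Vec4 → Vec4}
    (hf : ContDiff ℝ ∞ f) (hfc : HasCompactSupport f) (hv : ContDiff ℝ ∞ v)
    (hvc : HasCompactSupport v) {γ : ℝ → Vec4} {O : Set Vec4} (hO : IsOpen O)
    (hγ : Set.range γ ⊆ O) (hcone : ∀ q ∈ O, traceAddSymGrad f v q ∈ coneD) {t₀ : ℝ}
    (hgen : Generic (traceAddSymGrad f v (γ t₀))) : ¬ Tracks C γ := by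
  intro htracks
  obtain ⟨T, hT, hpos⟩ := htracks _ (smoothMatField_traceAddSymGrad hf hv)
    (hasCompactSupport_traceAddSymGrad hfc hvc) (symValued_traceAddSymGrad f v)
    ⟨O, hO, hγ, hcone⟩ ⟨t₀, hgen⟩
  exact hpos.ne' ((hC T hT).integral_minner_eq_zero f (hv.of_le (by simp)) hvc)

/-! ### The potential along a geodesic -/

/-- The Minkowski inner product as a continuous bilinear map. -/
def minkL : Vec4 →L[ℝ] Vec4 →L[ℝ] ℝ :=
  (Matrix.toLinearMap₂' ℝ E).toContinuousBilinearMap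

lemma minkL_apply (x y : Vec4) : minkL x y = mink x y := by
  simp only [minkL, E, LinearMap.toContinuousBilinearMap_apply, toLinearMap₂'_apply', dotProduct,
    mulVec_diagonal, Fin.sum_univ_four, cons_val_zero, cons_val_one, cons_val, mink]
  ring

lemma mink_comm (x y : Vec4) : mink x y = mink y x := by
  simp only [mink, mul_comm]

lemma E_mul_minkL_single (x : Vec4) (a : Fin 4) : E a a * minkL x (Pi.single a 1) = x a := by
  rw [minkL_apply]
  fin_cases a <;> simp [E, mink]

/-- The proper time `η(q - p, u)` of the event `q` for the observer moving along `t ↦ p + t u`. -/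
def properTime (p u q : Vec4) : ℝ := mink (q - p) u

/-- The quadratic form `η(w, w) - η(w, u)²` with `w = q - p`: for unit timelike `u`, minus the
squared distance of `q` from the line `t ↦ p + t u` in the rest frame of `u`. -/
def transverseSq (p u q : Vec4) : ℝ := mink (q - p) (q - p) - properTime p u q ^ 2

lemma UnitTimelike.properTime_line {u : Vec4} (hu : UnitTimelike u) (p : Vec4) (t : ℝ) :
    properTime p u (p + t • u) = t := by
  rw [properTime, add_sub_cancel_left, ← minkL_apply, map_smul, _root_.smul_apply, minkL_apply,
    hu.2, smul_eq_mul, mul_one]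

lemma UnitTimelike.transverseSq_line {u : Vec4} (hu : UnitTimelike u) (p : Vec4) (t : ℝ) :
    transverseSq p u (p + t • u) = 0 := by
  rw [transverseSq, hu.properTime_line, add_sub_cancel_left, ← minkL_apply, map_smul, map_smul,
    _root_.smul_apply, minkL_apply, hu.2]
  simp [sq]

/-- The vector field `-φ(s) y + (φ'(s) ρ / 2 + Ψ(s)) u`, where `s` is the proper time,
`y = q - p - s u` and `ρ = transverseSq p u q`. The first term cancels the transverse part of the
trace term `φ(s) η`, at the cost of a mixed term that the summand with `φ'` removes in turn. -/
def potential (φ Ψ : ℝ → ℝ) (p u q : Vec4) : Vec4 :=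
  -φ (properTime p u q) • (q - p - properTime p u q • u)
    + (1 / 2 * deriv φ (properTime p u q) * transverseSq p u q + Ψ (properTime p u q)) • u

lemma hasFDerivAt_properTime (p u q : Vec4) : HasFDerivAt (properTime p u) (minkL u) q := by
  have heq : properTime p u = fun y => minkL u (y - p) :=
    funext fun y => by rw [minkL_apply, mink_comm, properTime]
  rw [heq]
  exact (minkL u).hasFDerivAt.comp q ((hasFDerivAt_id q).sub_const p)

lemma hasFDerivAt_transverseSq (p u q : Vec4) :
    HasFDerivAt (transverseSq p u) ((2 : ℝ) • minkL (q - p - properTime p u q • u)) q := by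
  have hw : HasFDerivAt (fun y : Vec4 => y - p) (ContinuousLinearMap.id ℝ Vec4) q :=
    (hasFDerivAt_id q).sub_const p
  have h := (minkL.hasFDerivAt_of_bilinear hw hw).sub ((hasFDerivAt_properTime p u q).pow 2)
  have heq : transverseSq p u = fun y => minkL (y - p) (y - p) - properTime p u y ^ 2 :=
    funext fun y => by rw [minkL_apply, transverseSq]
  rw [heq]
  refine h.congr_fderiv (ContinuousLinearMap.ext fun x => ?_)
  simp only [ContinuousLinearMap.precompR_apply, ContinuousLinearMap.precompL_apply,
    ContinuousLinearMap.compL_apply, ContinuousLinearMap.comp_id, ContinuousLinearMap.id_apply,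
    _root_.add_apply, _root_.sub_apply, _root_.smul_apply, map_sub, map_smul, minkL_apply,
    mink_comm x, Nat.add_one_sub_one, pow_one, nsmul_eq_mul, Nat.cast_ofNat, smul_eq_mul]
  ring

lemma contDiff_properTime (p u : Vec4) : ContDiff ℝ ∞ (properTime p u) := by
  unfold properTime mink
  fun_prop

lemma contDiff_transverseSq (p u : Vec4) : ContDiff ℝ ∞ (transverseSq p u) := by
  unfold transverseSq properTime mink
  fun_prop

lemma contDiff_potential {φ Ψ : ℝ → ℝ} (hφ : ContDiff ℝ ∞ φ) (hΨ : ContDiff ℝ ∞ Ψ) (p u : Vec4) :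
    ContDiff ℝ ∞ (potential φ Ψ p u) := by
  have hφ' : ContDiff ℝ ∞ (deriv φ) := (contDiff_infty_iff_deriv.1 hφ).2
  have hs := contDiff_properTime p u
  have hw : ContDiff ℝ ∞ fun q => q - p := contDiff_id.sub contDiff_const
  exact ((hφ.comp hs).neg.smul (hw.sub (hs.smul contDiff_const))).add
    ((((contDiff_const.mul (hφ'.comp hs)).mul (contDiff_transverseSq p u)).add
      (hΨ.comp hs)).smul contDiff_const)

lemma hasFDerivAt_potential {φ Ψ : ℝ → ℝ} {p u q : Vec4}
    (hφ : DifferentiableAt ℝ φ (properTime p u q))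
    (hφ' : DifferentiableAt ℝ (deriv φ) (properTime p u q))
    (hΨ : DifferentiableAt ℝ Ψ (properTime p u q)) :
    HasFDerivAt (potential φ Ψ p u)
      (-φ (properTime p u q) • (ContinuousLinearMap.id ℝ Vec4 - (minkL u).smulRight u)
      - (deriv φ (properTime p u q) • minkL u).smulRight (q - p - properTime p u q • u)
      + (deriv φ (properTime p u q) • minkL (q - p - properTime p u q • u)).smulRight u
      + ((deriv Ψ (properTime p u q) + 1 / 2 * deriv (deriv φ) (properTime p u q)
        * transverseSq p u q) • minkL u).smulRight u) q := by
  have hs := hasFDerivAt_properTime p u q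
  have hw : HasFDerivAt (fun y : Vec4 => y - p) (ContinuousLinearMap.id ℝ Vec4) q :=
    (hasFDerivAt_id q).sub_const p
  have htrans := (hφ.hasDerivAt.comp_hasFDerivAt q hs).neg.smul (hw.sub (hs.smul_const u))
  have hlong := ((((hφ'.hasDerivAt.comp_hasFDerivAt q hs).const_mul (1 / 2)).mul
    (hasFDerivAt_transverseSq p u q)).add (hΨ.hasDerivAt.comp_hasFDerivAt q hs)).smul_const u
  refine (htrans.add hlong).congr_fderiv (ContinuousLinearMap.ext fun x => ?_)
  simp only [Function.comp_apply, Pi.neg_apply, Pi.sub_apply, _root_.add_apply, _root_.neg_apply,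
    _root_.sub_apply, _root_.smul_apply, ContinuousLinearMap.id_apply,
    ContinuousLinearMap.smulRight_apply, map_sub, map_smul, smul_eq_mul]
  module

lemma traceAddSymGrad_potential {φ Ψ : ℝ → ℝ} {p u q : Vec4}
    (hφ : DifferentiableAt ℝ φ (properTime p u q))
    (hφ' : DifferentiableAt ℝ (deriv φ) (properTime p u q))
    (hΨ : DifferentiableAt ℝ Ψ (properTime p u q)) :
    traceAddSymGrad (φ ∘ properTime p u) (potential φ Ψ p u) q =
      (φ (properTime p u q) + deriv Ψ (properTime p u q)
        + 1 / 2 * deriv (deriv φ) (properTime p u q) * transverseSq p u q) • vecMulVec u u := by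
  have hgrad : ∀ a b, raisedGrad (potential φ Ψ p u) q a b =
      -φ (properTime p u q) * (E a b - u a * u b)
      - deriv φ (properTime p u q) * (u a * (q - p - properTime p u q • u) b)
      + deriv φ (properTime p u q) * ((q - p - properTime p u q • u) a * u b)
      + (deriv Ψ (properTime p u q)
        + 1 / 2 * deriv (deriv φ) (properTime p u q) * transverseSq p u q) * (u a * u b) :=
    fun a b => by
      rw [raisedGrad_eq_of_hasFDerivAt (hasFDerivAt_potential hφ hφ' hΨ), of_apply,
        E_eq_diag_mul_single a b, ← E_mul_minkL_single u a,
        ← E_mul_minkL_single (q - p - properTime p u q • u) a]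
      simp only [_root_.add_apply, _root_.sub_apply, _root_.smul_apply, Pi.add_apply, Pi.sub_apply,
        Pi.smul_apply, ContinuousLinearMap.id_apply, ContinuousLinearMap.smulRight_apply,
        smul_eq_mul]
      ring
  ext a b
  simp only [traceAddSymGrad, Function.comp_apply, Matrix.add_apply, Matrix.smul_apply,
    transpose_apply, hgrad, vecMulVec_apply, smul_eq_mul, E_comm b a]
  ring

lemma potential_eventuallyEq_zero {φ Ψ : ℝ → ℝ} {p u q : Vec4}
    (hφ : properTime p u q ∉ tsupport φ) (hΨ : properTime p u q ∉ tsupport Ψ) :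
    potential φ Ψ p u =ᶠ[𝓝 q] 0 := by
  have hs : Tendsto (properTime p u) (𝓝 q) (𝓝 (properTime p u q)) :=
    (contDiff_properTime p u).continuous.continuousAt
  have hφ' : properTime p u q ∉ tsupport (deriv φ) := fun h => hφ (tsupport_deriv_subset h)
  filter_upwards [hs.eventually (notMem_tsupport_iff_eventuallyEq.1 hφ),
    hs.eventually (notMem_tsupport_iff_eventuallyEq.1 hφ'),
    hs.eventually (notMem_tsupport_iff_eventuallyEq.1 hΨ)] with y hy hy' hyΨ
  simp [potential, hy, hy', hyΨ]

lemma traceAddSymGrad_mul_potential_eq_zero {φ Ψ : ℝ → ℝ} {p u q : Vec4}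
    (hφ : properTime p u q ∉ tsupport φ) (hΨ : properTime p u q ∉ tsupport Ψ) (χ : Vec4 → ℝ) :
    traceAddSymGrad (χ * (φ ∘ properTime p u)) (χ • potential φ Ψ p u) q = 0 := by
  refine traceAddSymGrad_eq_zero (by simp [image_eq_zero_of_notMem_tsupport hφ]) ?_
  filter_upwards [potential_eventuallyEq_zero hφ hΨ] with y hy
  simp [hy]

/-! ### Profiles in proper time -/

/-- Profiles for `potential`, for which the coefficient `φ + Ψ' + φ'' ρ / 2` in
`traceAddSymGrad_potential` is nonnegative for small `ρ`. The derivative of a compactly supported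
`Ψ` cannot be nonnegative by itself, so `φ` has to carry the mass; the normalization on
`tsupport φ` leaves room there for the error term `φ'' ρ / 2`. -/
structure IsProfilePair (φ Ψ : ℝ → ℝ) : Prop where
  contDiff_left : ContDiff ℝ ∞ φ
  contDiff_right : ContDiff ℝ ∞ Ψ
  hasCompactSupport_left : HasCompactSupport φ
  hasCompactSupport_right : HasCompactSupport Ψ
  add_deriv_nonneg : ∀ s, 0 ≤ φ s + deriv Ψ s
  add_deriv_eq_one : ∀ s ∈ tsupport φ, φ s + deriv Ψ s = 1
  left_ne_zero : φ ≠ 0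

lemma hasDerivAt_integral_two_mul {b : ℝ → ℝ} (hb : Continuous b) (s : ℝ) :
    HasDerivAt (fun x => ∫ t in 2 * x..x, b t) (b s - 2 * b (2 * s)) s := by
  set B : ℝ → ℝ := fun x => ∫ t in 0..x, b t
  have hBderiv : ∀ x, HasDerivAt B (b x) x := fun x =>
    (hb.integral_hasStrictDerivAt 0 x).hasDerivAt
  have hsplit : (fun x => ∫ t in 2 * x..x, b t) = fun x => B x - B (2 * x) := funext fun x =>
    (intervalIntegral.integral_interval_sub_left (hb.intervalIntegrable _ _)
      (hb.intervalIntegrable _ _)).symm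
  have hdouble : HasDerivAt (fun x : ℝ => 2 * x) 2 s := by
    simpa using (hasDerivAt_id s).const_mul (2 : ℝ)
  rw [hsplit, mul_comm]
  exact (hBderiv s).sub ((hBderiv (2 * s)).comp s hdouble)

lemma contDiff_integral_two_mul {b : ℝ → ℝ} (hb : ContDiff ℝ ∞ b) :
    ContDiff ℝ ∞ fun x => ∫ t in 2 * x..x, b t := by
  have hderiv := hasDerivAt_integral_two_mul hb.continuous
  rw [contDiff_infty_iff_deriv, deriv_eq hderiv]
  exact ⟨fun s => (hderiv s).differentiableAt, by fun_prop⟩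

lemma integral_two_mul_eq_zero {b : ℝ → ℝ} {r : ℝ} (hb : ∀ t, r < |t| → b t = 0) {s : ℝ}
    (hs : r < |s|) : ∫ t in 2 * s..s, b t = 0 := by
  refine intervalIntegral.integral_zero_ae (ae_of_all _ fun t ht => hb t (hs.trans_le ?_))
  rcases le_total 0 s with h | h
  · rw [Set.uIoc_of_ge (by linarith)] at ht
    rw [abs_of_nonneg h]
    exact ht.1.le.trans (le_abs_self t)
  · rw [Set.uIoc_of_le (by linarith)] at ht
    rw [abs_of_nonpos h]
    exact (neg_le_neg ht.2).trans (neg_le_abs t)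

-- `Ψ` redistributes the mass of the concentrated bump `φ`, so that `φ + Ψ'` is the wider bump `b`.
lemma exists_isProfilePair : ∃ φ Ψ : ℝ → ℝ, IsProfilePair φ Ψ := by
  let b : ContDiffBump (0 : ℝ) := ⟨1, 2, one_pos, one_lt_two⟩
  have hb : ContDiff ℝ ∞ b := b.contDiff
  have hone : ∀ s, |s| ≤ 1 → b s = 1 := fun s hs => b.one_of_mem_closedBall (by simpa using hs)
  have hzero : ∀ s, 2 < |s| → b s = 0 := fun s hs => b.zero_of_le_dist (by simpa using hs.le)
  have hsum : ∀ s, 2 * b (2 * s) + deriv (fun x => ∫ t in 2 * x..x, b t) s = b s := fun s => by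
    rw [(hasDerivAt_integral_two_mul hb.continuous s).deriv]
    ring
  have hsupp : tsupport (fun s => 2 * b (2 * s)) ⊆ Metric.closedBall 0 1 := by
    refine closure_minimal (fun s hs => ?_) Metric.isClosed_closedBall
    contrapose! hs
    have habs : 2 < |2 * s| := by
      rw [abs_mul, abs_two]
      linarith [show 1 < |s| by simpa using hs]
    simp [hzero _ habs]
  refine ⟨fun s => 2 * b (2 * s), fun s => ∫ t in 2 * s..s, b t, by fun_prop,
    contDiff_integral_two_mul hb, (isCompact_closedBall 0 1).of_isClosed_subset
      (isClosed_tsupport _) hsupp, ?_, fun s => ?_, fun s hs => ?_, ?_⟩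
  · exact HasCompactSupport.intro (isCompact_closedBall 0 2) fun s hs =>
      integral_two_mul_eq_zero hzero (by simpa using hs)
  · rw [hsum]
    exact b.nonneg
  · rw [hsum]
    exact hone s (by simpa using hsupp hs)
  · intro h
    simpa [hone 0] using congrFun h 0

lemma IsProfilePair.exists_pos_forall_nonneg {φ Ψ : ℝ → ℝ} (h : IsProfilePair φ Ψ) :
    ∃ ε > 0, ∀ s ρ, |ρ| < ε → 0 ≤ φ s + deriv Ψ s + 1 / 2 * deriv (deriv φ) s * ρ := by
  have hsmooth : ContDiff ℝ ∞ (deriv (deriv φ)) :=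
    (contDiff_infty_iff_deriv.1 (contDiff_infty_iff_deriv.1 h.contDiff_left).2).2
  obtain ⟨M, hM⟩ := h.hasCompactSupport_left.deriv.deriv.exists_bound_of_continuous
    hsmooth.continuous
  have hMnonneg : 0 ≤ M := (norm_nonneg _).trans (hM 0)
  refine ⟨2 / (M + 1), by positivity, fun s ρ hρ => ?_⟩
  by_cases hs : s ∈ tsupport φ
  · have herror : |deriv (deriv φ) s * ρ| ≤ 2 := calc
      |deriv (deriv φ) s * ρ| = ‖deriv (deriv φ) s‖ * |ρ| := by rw [abs_mul, Real.norm_eq_abs]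
      _ ≤ (M + 1) * (2 / (M + 1)) := by gcongr; exact (hM s).trans (by linarith)
      _ = 2 := by field_simp
    rw [h.add_deriv_eq_one s hs]
    linarith [(abs_le.1 herror).1]
  · have hzero : deriv (deriv φ) s = 0 := image_eq_zero_of_notMem_tsupport fun hmem =>
      hs (tsupport_deriv_subset (tsupport_deriv_subset hmem))
    rw [hzero]
    simpa using h.add_deriv_nonneg s

/-! ### Failure of tracking -/

lemma IsProfilePair.traceAddSymGrad_potential {φ Ψ : ℝ → ℝ} (h : IsProfilePair φ Ψ)
    (p u q : Vec4) :
    traceAddSymGrad (φ ∘ properTime p u) (potential φ Ψ p u) q =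
      (φ (properTime p u q) + deriv Ψ (properTime p u q)
        + 1 / 2 * deriv (deriv φ) (properTime p u q) * transverseSq p u q) • vecMulVec u u :=
  _root_.traceAddSymGrad_potential (h.contDiff_left.differentiable (by simp) _)
    ((contDiff_infty_iff_deriv.1 h.contDiff_left).2.differentiable (by simp) _)
    (h.contDiff_right.differentiable (by simp) _)

lemma IsProfilePair.exists_isOpen_forall_mem_coneD {φ Ψ : ℝ → ℝ} (h : IsProfilePair φ Ψ)
    (p : Vec4) {u : Vec4} (hu : UnitTimelike u) {χ : Vec4 → ℝ} {U : Set Vec4} (hU : IsOpen U)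
    (hχ : ∀ q ∈ U, χ q = 1) (hline : ∀ t ∈ tsupport φ ∪ tsupport Ψ, p + t • u ∈ U) :
    ∃ O : Set Vec4, IsOpen O ∧ Set.range (fun t : ℝ => p + t • u) ⊆ O ∧
      ∀ q ∈ O, traceAddSymGrad (χ * (φ ∘ properTime p u)) (χ • potential φ Ψ p u) q ∈ coneD := by
  obtain ⟨ε, hε, hcoeff⟩ := h.exists_pos_forall_nonneg
  refine ⟨U ∩ {q | |transverseSq p u q| < ε} ∪ properTime p u ⁻¹' (tsupport φ ∪ tsupport Ψ)ᶜ,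
    ?_, ?_, ?_⟩
  · have hclosed := (isClosed_tsupport φ).union (isClosed_tsupport Ψ)
    exact (hU.inter (isOpen_lt (contDiff_transverseSq p u).continuous.abs continuous_const)).union
      (hclosed.isOpen_compl.preimage (contDiff_properTime p u).continuous)
  · rintro _ ⟨t, rfl⟩
    by_cases ht : t ∈ tsupport φ ∪ tsupport Ψ
    · exact Or.inl ⟨hline t ht, by simpa [hu.transverseSq_line] using hε⟩
    · exact Or.inr (by
        simpa only [Set.mem_preimage, hu.properTime_line, Set.mem_compl_iff] using ht)
  · rintro q (⟨hq, hρ⟩ | hq)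
    · rw [traceAddSymGrad_mul_of_eventuallyEq_one (eventually_of_mem (hU.mem_nhds hq) hχ),
        h.traceAddSymGrad_potential]
      exact smul_vecMulVec_self_mem_coneD hu.1.futureCausal (hcoeff _ _ hρ)
    · rw [Set.mem_preimage, Set.mem_compl_iff, Set.mem_union, not_or] at hq
      rw [traceAddSymGrad_mul_potential_eq_zero hq.1 hq.2]
      exact zero_mem_coneD

lemma IsProfilePair.generic_traceAddSymGrad {φ Ψ : ℝ → ℝ} (h : IsProfilePair φ Ψ) (p : Vec4)
    {u : Vec4} (hu : UnitTimelike u) {χ : Vec4 → ℝ} {t : ℝ} (ht : t ∈ tsupport φ)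
    (hχ : χ =ᶠ[𝓝 (p + t • u)] 1) :
    Generic (traceAddSymGrad (χ * (φ ∘ properTime p u)) (χ • potential φ Ψ p u) (p + t • u)) := by
  rw [traceAddSymGrad_mul_of_eventuallyEq_one hχ, h.traceAddSymGrad_potential,
    hu.transverseSq_line, hu.properTime_line, h.add_deriv_eq_one t ht, mul_zero, add_zero, one_smul]
  exact hu.1.generic_vecMulVec_self

theorem maxwell_tracks_no_timelike_geodesics_general {C : Set (Vec4 → Mat4)}
    (hC : ∀ T ∈ C, IsTraceFreeConserved T) (p : Vec4) {u : Vec4} (hu : UnitTimelike u) :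
    ¬ Tracks C (fun t => p + t • u) := by
  obtain ⟨φ, Ψ, h⟩ := exists_isProfilePair
  obtain ⟨t₀, ht₀⟩ := Function.ne_iff.1 h.left_ne_zero
  have ht₀' : t₀ ∈ tsupport φ := subset_tsupport φ ht₀
  have hline_continuous : Continuous fun t : ℝ => p + t • u := by fun_prop
  obtain ⟨R, hR, hline⟩ := ((h.hasCompactSupport_left.isCompact.union
    h.hasCompactSupport_right.isCompact).image hline_continuous).isBounded.subset_ball_lt 0 p
  rw [Set.image_subset_iff] at hline
  let χ : ContDiffBump p := ⟨R, R + 1, hR, lt_add_one R⟩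
  have hχ : ∀ q ∈ Metric.ball p R, χ q = 1 := fun q hq =>
    χ.one_of_mem_closedBall (Metric.ball_subset_closedBall hq)
  obtain ⟨O, hO, hOline, hcone⟩ :=
    h.exists_isOpen_forall_mem_coneD p hu Metric.isOpen_ball hχ hline
  have hgen := h.generic_traceAddSymGrad p hu ht₀'
    (eventually_of_mem (Metric.isOpen_ball.mem_nhds (hline (Or.inl ht₀'))) hχ)
  exact not_tracks_of_traceAddSymGrad hC
    (χ.contDiff.mul (h.contDiff_left.comp (contDiff_properTime p u)))
    χ.hasCompactSupport.mul_right
    (χ.contDiff.smul (contDiff_potential h.contDiff_left h.contDiff_right p u))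
    χ.hasCompactSupport.smul_right hO hOline hcone hgen

/-- Source-free Maxwell fields track no timelike geodesics. -/
theorem maxwell_tracks_no_timelike_geodesics (p : Vec4) (u : Vec4) (hu : UnitTimelike u) :
    ¬ Tracks maxwellC (fun t => p + t • u) :=
  maxwell_tracks_no_timelike_geodesics_general
    (fun _ => isTraceFreeConserved_of_mem_maxwellC) p hu
end
end

section
/- Klein–Gordon fields of all positive masses track all timelike and null geodesics (flat-space version): let 𝒞 be the collection of stress-energy tensors T[φ,m] of all pairs (φ, m) with m > 0 and φ : ℝ⁴ → ℝ a smooth solution of the mass-m Klein–Gordon equation. Then for every p ∈ ℝ⁴ and every u ∈ ℝ⁴ that is either unit timelike or future null, the collection 𝒞 tracks the geodesic γ : t ↦ p + t • u. -/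
open Matrix MeasureTheory Filter Topology

noncomputable section

/-- The collection of stress-energy tensors of smooth solutions of the mass-m
Klein–Gordon equation, over all masses m > 0. -/
def kgC : Set (Vec4 → Mat4) :=
  { T | ∃ (φ : Vec4 → ℝ) (m : ℝ), 0 < m ∧ ContDiff ℝ (⊤ : ℕ∞) φ ∧ SolvesKG φ m ∧
      T = kgT φ m }

/-!
Pair the stress-energy tensors with a test field `x` and let `u` be the direction of the geodesic,
`u♭ = E *ᵥ u`. A superposition of plane waves whose wave covectors `ε⁻¹ • (u♭ + ε • r i)` satisfy
the dispersion relation is an exact Klein–Gordon solution. Adding the stress-energy tensors of two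
such solutions in phase quadrature cancels the rapidly oscillating terms: as `ε → 0`, `ε²` times
the sum tends to `|∑ i, exp (√-1 * r i ⬝ᵥ p)|² • u♭ ⊗ u♭`, the stress-energy of dust moving along
`u`. In the limit the `r i` may be any covectors annihilating `u`, so the dust density can be any
power `G ^ N` of an interference pattern `G` that peaks, on the support of `x`, exactly along the
geodesic. For large `N` the integral of `G ^ N * x(u♭, u♭)` is dominated by the neighbourhood of the
geodesic where `x(u♭, u♭) ≥ 0`, and is therefore positive.
-/

open scoped Real

section Peak

variable {X : Type*} [TopologicalSpace X]

lemma exists_pos_lt_of_forall_lt {K : Set X} (hK : IsCompact K) {G : X → ℝ}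
    (hG : ContinuousOn G K) {a : ℝ} (ha : 0 < a) (hlt : ∀ p ∈ K, G p < a) :
    ∃ σ, 0 < σ ∧ σ < a ∧ ∀ p ∈ K, G p < σ := by
  rcases K.eq_empty_or_nonempty with rfl | hne
  · exact ⟨a / 2, by simpa using ha⟩
  · obtain ⟨q, hq, hmax⟩ := hK.exists_isMaxOn hne hG
    obtain ⟨σ, hσ, hσa⟩ := exists_between (max_lt (hlt q hq) ha)
    exact ⟨σ, (le_max_right _ _).trans_lt hσ, hσa,
      fun p hp => (hmax hp).trans_lt ((le_max_left _ _).trans_lt hσ)⟩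

variable [MeasurableSpace X] [OpensMeasurableSpace X] {μ : Measure X}

lemma tendsto_setIntegral_pow_mul_zero {F h : X → ℝ} (hF : Continuous F) (hF0 : ∀ p, 0 ≤ F p)
    (hh : Integrable h μ) {s : Set X} (hs : MeasurableSet s)
    (hlt : ∀ p ∈ s, h p ≠ 0 → F p < 1) :
    Tendsto (fun N : ℕ => ∫ p in s, F p ^ N * h p ∂μ) atTop (𝓝 0) := by
  rw [← integral_zero X ℝ (μ := μ.restrict s)]
  refine tendsto_integral_of_dominated_convergence (fun p => |h p|)
    (fun N => (hF.pow N).aestronglyMeasurable.mul hh.1.restrict) hh.abs.restrict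
    (fun N => (ae_restrict_iff' hs).2 (Eventually.of_forall fun p hp => ?_))
    ((ae_restrict_iff' hs).2 (Eventually.of_forall fun p hp => ?_)) <;>
  rcases eq_or_ne (h p) 0 with hp0 | hp0
  · simp [hp0]
  · rw [norm_mul, Real.norm_eq_abs, Real.norm_eq_abs, abs_of_nonneg (pow_nonneg (hF0 p) N)]
    exact mul_le_of_le_one_left (abs_nonneg _) (pow_le_one₀ (hF0 p) (hlt p hp hp0).le)
  · simp [hp0]
  · simpa using (tendsto_pow_atTop_nhds_zero_of_lt_one (hF0 p) (hlt p hp hp0)).mul_const (h p)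

lemma eventually_integral_pow_mul_pos [μ.IsOpenPosMeasure] [IsFiniteMeasureOnCompacts μ]
    {G h : X → ℝ} (hG : Continuous G) (hG0 : ∀ p, 0 ≤ G p) (hh : Continuous h)
    (hc : HasCompactSupport h) {O : Set X} (hO : IsOpen O)
    (hO0 : ∀ p ∈ O, 0 ≤ h p) {p₁ : X} (hp₁O : p₁ ∈ O) (hp₁ : 0 < h p₁) (hG1 : 0 < G p₁)
    (hlt : ∀ p ∈ tsupport h \ O, G p < G p₁) :
    ∀ᶠ N : ℕ in atTop, 0 < ∫ p, G p ^ N * h p ∂μ := by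
  obtain ⟨σ, hσ0, hσ1, hσ⟩ :=
    exists_pos_lt_of_forall_lt (hc.isCompact.diff hO) hG.continuousOn hG1 hlt
  have hint : Integrable h μ := hh.integrable_of_hasCompactSupport hc
  set F : X → ℝ := fun p => G p / σ
  have hF : Continuous F := hG.div_const σ
  have hF0 : ∀ p, 0 ≤ F p := fun p => div_nonneg (hG0 p) hσ0.le
  have hFint : ∀ N : ℕ, Integrable (fun p => F p ^ N * h p) μ := fun N =>
    ((hF.pow N).mul hh).integrable_of_hasCompactSupport hc.mul_left
  set B : Set X := O ∩ {p | 1 < F p}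
  have hB : IsOpen B := hO.inter (isOpen_lt continuous_const hF)
  have hpeak : 0 < ∫ p in B, h p ∂μ := by
    rw [setIntegral_pos_iff_support_of_nonneg_ae ((ae_restrict_iff' hB.measurableSet).2
      (Eventually.of_forall fun p hp => hO0 p hp.1)) hint.integrableOn]
    exact (hh.isOpen_support.inter hB).measure_pos μ ⟨p₁, hp₁.ne', hp₁O, (one_lt_div hσ0).2 hσ1⟩
  have hnear : ∀ N : ℕ, ∫ p in B, h p ∂μ ≤ ∫ p in O, F p ^ N * h p ∂μ := fun N =>
    (setIntegral_mono_on hint.integrableOn (hFint N).integrableOn hB.measurableSet fun p hp =>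
      le_mul_of_one_le_left (hO0 p hp.1) (one_le_pow₀ hp.2.le)).trans
    (setIntegral_mono_set (hFint N).integrableOn ((ae_restrict_iff' hO.measurableSet).2
      (Eventually.of_forall fun p hp => mul_nonneg (pow_nonneg (hF0 p) N) (hO0 p hp)))
      (Eventually.of_forall Set.inter_subset_left))
  have hfar := tendsto_setIntegral_pow_mul_zero (μ := μ) hF hF0 hint hO.measurableSet.compl
    fun p hpO hp0 => (div_lt_one hσ0).2 (hσ p ⟨subset_tsupport h hp0, hpO⟩)
  filter_upwards [hfar.eventually_const_lt (neg_lt_zero.2 hpeak)] with N hN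
  have hscale : ∫ p, G p ^ N * h p ∂μ = σ ^ N * ∫ p, F p ^ N * h p ∂μ := by
    rw [← integral_const_mul]
    refine integral_congr_ae (Eventually.of_forall fun p => ?_)
    simp only [F, div_pow]
    field_simp
  rw [hscale, ← integral_add_compl hO.measurableSet (hFint N)]
  exact mul_pos (pow_pos hσ0 N) (by linarith [hnear N])

end Peak

section Intensity

variable {ι : Type*} [Fintype ι]

/-- The intensity `|∑ i, exp (√-1 * α i)|²` of a superposition of unit waves with phases `α`. -/
def intensity (α : ι → ℝ) : ℝ := Complex.normSq (∑ i, Complex.exp (α i * Complex.I))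

lemma intensity_eq_sum_cos (α : ι → ℝ) :
    intensity α = ∑ i, ∑ j, Real.cos (α i - α j) := by
  simp only [intensity, Complex.normSq_apply, Complex.re_sum, Complex.im_sum,
    Complex.exp_ofReal_mul_I_re, Complex.exp_ofReal_mul_I_im, Finset.sum_mul_sum,
    ← Finset.sum_add_distrib, Real.cos_sub]

lemma continuous_intensity : Continuous (intensity : (ι → ℝ) → ℝ) := by
  unfold intensity
  fun_prop

lemma intensity_nonneg (α : ι → ℝ) : 0 ≤ intensity α := Complex.normSq_nonneg _

lemma intensity_zero : intensity (0 : ι → ℝ) = (Fintype.card ι : ℝ) ^ 2 := by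
  simp [intensity_eq_sum_cos, sq]

lemma intensity_pow (α : ι → ℝ) (N : ℕ) :
    intensity α ^ N = intensity fun f : Fin N → ι => ∑ k, α (f k) := by
  simp only [intensity, ← map_pow, Fintype.sum_pow, ← Complex.exp_sum, Complex.ofReal_sum,
    Finset.sum_mul]

lemma intensity_lt_intensity_zero {α : ι → ℝ} {i j : ι} (hij : α i ≠ α j)
    (hsmall : |α i - α j| < 2 * π) : intensity α < intensity (0 : ι → ℝ) := by
  have hcos : Real.cos (α i - α j) < 1 := (Real.cos_le_one _).lt_of_ne fun h =>
    sub_ne_zero.2 hij <|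
      (Real.cos_eq_one_iff_of_lt_of_lt (abs_lt.1 hsmall).1 (abs_lt.1 hsmall).2).1 h
  simp only [intensity_eq_sum_cos, Pi.zero_apply, sub_self, Real.cos_zero]
  exact Finset.sum_lt_sum (fun i _ => Finset.sum_le_sum fun j _ => Real.cos_le_one _)
    ⟨i, Finset.mem_univ i, Finset.sum_lt_sum (fun j _ => Real.cos_le_one _)
      ⟨j, Finset.mem_univ j, hcos⟩⟩

end Intensity

section Minkowski

lemma mink_eq_dotProduct_mulVec (v w : Vec4) : mink v w = v ⬝ᵥ E *ᵥ w := by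
  simp only [mink, E, dotProduct, mulVec_diagonal, Fin.sum_univ_four, cons_val]
  ring

lemma E_mulVec_dotProduct (v w : Vec4) : E *ᵥ v ⬝ᵥ w = mink v w := by
  simp only [mink, E, dotProduct, mulVec_diagonal, Fin.sum_univ_four, cons_val]
  ring

lemma mink_E_mulVec_left (u v : Vec4) : mink (E *ᵥ u) v = u ⬝ᵥ v := by
  simp [mink, E, dotProduct, mulVec_diagonal, Fin.sum_univ_four]

lemma mink_E_mulVec_E_mulVec (u : Vec4) : mink (E *ᵥ u) (E *ᵥ u) = mink u u := by
  rw [mink_E_mulVec_left, mink_eq_dotProduct_mulVec]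

lemma FutureCausal.mink_nonneg {v w : Vec4} (hv : FutureCausal v) (hw : FutureCausal w) :
    0 ≤ mink v w := by
  have hcs := Finset.sum_mul_sq_le_sq_mul_sq Finset.univ (fun i : Fin 3 => v i.succ)
    fun i => w i.succ
  have hle : (∑ i : Fin 3, v i.succ ^ 2) * ∑ i : Fin 3, w i.succ ^ 2 ≤ v 0 ^ 2 * w 0 ^ 2 := by
    have hv1 := hv.1
    have hw1 := hw.1
    refine mul_le_mul ?_ ?_ (by positivity) (by positivity) <;>
    · simp only [mink, Fin.sum_univ_three, Fin.succ_zero_eq_one, Fin.succ_one_eq_two,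
        Fin.reduceSucc] at *
      linarith
  have habs := abs_le_of_sq_le_sq (hcs.trans (hle.trans_eq (mul_pow _ _ 2).symm))
    (mul_nonneg hv.2 hw.2)
  simp only [Fin.sum_univ_three, Fin.succ_zero_eq_one, Fin.succ_one_eq_two,
    Fin.reduceSucc] at habs
  rw [mink]
  linarith [(abs_le.1 habs).2]

lemma FutureCausal.dotProduct_mulVec_nonneg {u : Vec4} (hu : FutureCausal u) {X : Mat4}
    (hX : X ∈ coneD) : 0 ≤ E *ᵥ u ⬝ᵥ X *ᵥ (E *ᵥ u) := by
  obtain ⟨n, ξ, ζ, hξ, hζ, rfl⟩ := hX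
  have hterm : ∀ k, E *ᵥ u ⬝ᵥ ((1/2 : ℝ) • (vecMulVec (ξ k) (ζ k) + vecMulVec (ζ k) (ξ k))) *ᵥ
      (E *ᵥ u) = mink u (ξ k) * mink u (ζ k) := fun k => by
    simp only [smul_mulVec, add_mulVec, vecMulVec_mulVec, op_smul_eq_smul, dotProduct_smul,
      dotProduct_add, smul_eq_mul, dotProduct_comm _ (E *ᵥ u), E_mulVec_dotProduct]
    ring
  rw [sum_mulVec, dotProduct_sum]
  refine Finset.sum_nonneg fun k _ => ?_
  rw [hterm]
  exact mul_nonneg (hu.mink_nonneg (hξ k)) (hu.mink_nonneg (hζ k))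

lemma Generic.exists_pos_sub_smul_mem_coneD {X : Mat4} (hX : Generic X) {Y : Mat4}
    (hY : Yᵀ = Y) : ∃ t : ℝ, 0 < t ∧ X - t • Y ∈ coneD := by
  obtain ⟨hXs, hint⟩ := hX
  have hcont : Continuous fun t : ℝ =>
      (⟨X - t • Y, by simp [hXs, hY]⟩ : { A : Mat4 // Aᵀ = A }) := by fun_prop
  have hmem : ∀ᶠ t : ℝ in 𝓝 0, X - t • Y ∈ coneD :=
    (hcont.continuousAt (x := 0)).eventually
      (show _ ∈ 𝓝 _ from mem_interior_iff_mem_nhds.1 (by simpa using hint))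
  obtain ⟨t, ht, ht0⟩ := ((hmem.filter_mono nhdsWithin_le_nhds).and
    (self_mem_nhdsWithin : Set.Ioi (0 : ℝ) ∈ 𝓝[>] 0)).exists
  exact ⟨t, ht0, ht⟩

lemma Generic.dotProduct_mulVec_pos_s19 {X : Mat4} (hX : Generic X) {u : Vec4} (hu : FutureCausal u)
    (hu0 : u ≠ 0) : 0 < E *ᵥ u ⬝ᵥ X *ᵥ (E *ᵥ u) := by
  obtain ⟨t, ht, htX⟩ := hX.exists_pos_sub_smul_mem_coneD (transpose_one (n := Fin 4) (α := ℝ))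
  have hnonneg := hu.dotProduct_mulVec_nonneg htX
  have hE : 0 < E *ᵥ u ⬝ᵥ E *ᵥ u := by
    have : E *ᵥ u ⬝ᵥ E *ᵥ u = u ⬝ᵥ u := by
      rw [← mink_eq_dotProduct_mulVec, mink_E_mulVec_left]
    rw [this]
    simpa using dotProduct_self_star_pos_iff.2 hu0
  rw [sub_mulVec, smul_mulVec, one_mulVec, dotProduct_sub, dotProduct_smul, smul_eq_mul] at hnonneg
  linarith [mul_pos ht hE]

end Minkowski

section StressEnergy

/-- The coordinate differential of `φ`, as a covector. -/
def grad (φ : Vec4 → ℝ) (p : Vec4) : Vec4 := fun a => pd a φ p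

/-- The polarised Klein–Gordon stress-energy paired with `X`: `v` and `w` are the differentials of
the two fields, and `τ` stands for the squared mass times the product of their values. -/
def kgForm (X : Mat4) (τ : ℝ) (v w : Vec4) : ℝ :=
  v ⬝ᵥ X *ᵥ w - (1/2 : ℝ) * (mink v w - τ) * (E * X).trace

lemma kgT_eq_vecMulVec_sub_smul_E (φ : Vec4 → ℝ) (m : ℝ) (p : Vec4) :
    kgT φ m p = vecMulVec (grad φ p) (grad φ p)
      - ((1/2 : ℝ) * (mink (grad φ p) (grad φ p) - m ^ 2 * φ p ^ 2)) • E := by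
  have hmink : ∑ c, E c c * pd c φ p ^ 2 = mink (grad φ p) (grad φ p) := by
    simp only [E, diagonal_apply_eq, Fin.sum_univ_four, cons_val, mink, grad]
    ring
  ext a b
  simp only [kgT, hmink, of_apply, Matrix.sub_apply, Matrix.smul_apply, vecMulVec_apply, grad,
    smul_eq_mul]
  ring

lemma minner_vecMulVec_sub_smul_E (v w : Vec4) (s : ℝ) (X : Mat4) :
    minner (vecMulVec v w - s • E) X = v ⬝ᵥ X *ᵥ w - s * (E * X).trace := by
  have htrace : (E * X).trace = ∑ i, ∑ j, E i j * X i j := by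
    simp [E, trace, diagonal_mul, diagonal_apply]
  simp only [minner, htrace, Matrix.sub_apply, Matrix.smul_apply, vecMulVec_apply, smul_eq_mul,
    sub_mul, Finset.sum_sub_distrib, dotProduct, mulVec, Finset.mul_sum, mul_assoc, mul_comm (w _)]

lemma minner_kgT (φ : Vec4 → ℝ) (m : ℝ) (p : Vec4) (X : Mat4) :
    minner (kgT φ m p) X = kgForm X (m ^ 2 * φ p ^ 2) (grad φ p) (grad φ p) := by
  rw [kgT_eq_vecMulVec_sub_smul_E, minner_vecMulVec_sub_smul_E, kgForm]

lemma kgForm_smul_smul (X : Mat4) (τ r : ℝ) (v w : Vec4) :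
    kgForm X (r ^ 2 * τ) (r • v) (r • w) = r ^ 2 * kgForm X τ v w := by
  simp only [kgForm, mink_eq_dotProduct_mulVec, mulVec_smul, dotProduct_smul, smul_dotProduct,
    smul_eq_mul]
  ring

lemma kgForm_neg_neg (X : Mat4) (τ : ℝ) (v w : Vec4) :
    kgForm X τ (-v) (-w) = kgForm X τ v w := by
  simpa using kgForm_smul_smul X τ (-1) v w

lemma kgForm_mink (X : Mat4) (v w : Vec4) : kgForm X (mink v w) v w = v ⬝ᵥ X *ᵥ w := by
  simp [kgForm]

lemma continuous_kgForm {Y : Type*} [TopologicalSpace Y] {X : Y → Mat4} {τ : Y → ℝ}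
    {v w : Y → Vec4} (hX : Continuous X) (hτ : Continuous τ) (hv : Continuous v)
    (hw : Continuous w) : Continuous fun y => kgForm (X y) (τ y) (v y) (w y) := by
  simp only [kgForm, mink_eq_dotProduct_mulVec]
  fun_prop

variable {ι : Type*} [Fintype ι]

lemma sum_smul_dotProduct_mulVec_sum_smul {n R : Type*} [Fintype n] [CommSemiring R]
    (M : Matrix n n R) (s : ι → R) (v : ι → n → R) :
    (∑ i, s i • v i) ⬝ᵥ M *ᵥ ∑ j, s j • v j = ∑ i, ∑ j, s i * s j * (v i ⬝ᵥ M *ᵥ v j) := by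
  rw [sum_dotProduct]
  refine Finset.sum_congr rfl fun i _ => ?_
  simp only [mulVec_sum, dotProduct_sum, mulVec_smul, smul_dotProduct, dotProduct_smul, smul_eq_mul,
    mul_assoc, mul_left_comm]

lemma kgForm_sum_add_kgForm_sum (X : Mat4) (τ : ℝ) (κ : ι → Vec4) (a b : ι → ℝ) :
    kgForm X (τ * (∑ i, a i) ^ 2) (∑ i, b i • κ i) (∑ i, b i • κ i)
        + kgForm X (τ * (∑ i, b i) ^ 2) (∑ i, a i • κ i) (∑ i, a i • κ i)
      = ∑ i, ∑ j, (a i * a j + b i * b j) * kgForm X τ (κ i) (κ j) := by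
  simp only [kgForm, mink_eq_dotProduct_mulVec, sum_smul_dotProduct_mulVec_sum_smul, sq,
    Finset.sum_mul_sum]
  simp only [Finset.mul_sum, Finset.sum_mul, ← Finset.sum_sub_distrib, ← Finset.sum_add_distrib]
  exact Finset.sum_congr rfl fun i _ => Finset.sum_congr rfl fun j _ => by ring

end StressEnergy

section PlaneWaves

variable {ι : Type*} [Fintype ι]

/-- The superposition of plane waves with amplitudes `c`, wave covectors `κ` and phase shifts
`β`. -/
def planeWaveSum (c : ι → ℝ) (κ : ι → Vec4) (β : ι → ℝ) (p : Vec4) : ℝ :=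
  ∑ i, c i * Real.cos (κ i ⬝ᵥ p + β i)

lemma contDiff_planeWaveSum (c : ι → ℝ) (κ : ι → Vec4) (β : ι → ℝ) {n : WithTop ℕ∞} :
    ContDiff ℝ n (planeWaveSum c κ β) := by
  unfold planeWaveSum dotProduct
  fun_prop

lemma hasFDerivAt_dotProduct {n : Type*} [Fintype n] (k p : n → ℝ) :
    HasFDerivAt (fun q : n → ℝ => k ⬝ᵥ q)
      (LinearMap.toContinuousLinearMap (dotProductBilin ℝ ℝ k)) p :=
  (LinearMap.toContinuousLinearMap (dotProductBilin ℝ ℝ k)).hasFDerivAt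

lemma pd_planeWaveSum (a : Fin 4) (c : ι → ℝ) (κ : ι → Vec4) (β : ι → ℝ) :
    pd a (planeWaveSum c κ β)
      = planeWaveSum (fun i => c i * κ i a) κ (fun i => β i + π / 2) := by
  ext p
  have hderiv : HasFDerivAt (planeWaveSum c κ β) _ p := HasFDerivAt.fun_sum fun i _ =>
    (((hasFDerivAt_dotProduct (κ i) p).add_const (β i)).cos).const_mul (c i)
  rw [pd, hderiv.fderiv]
  simp only [planeWaveSum, ← add_assoc, Real.cos_add_pi_div_two]
  simp [mul_assoc, mul_comm (Real.sin _)]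

lemma grad_planeWaveSum (c : ι → ℝ) (κ : ι → Vec4) (β : ι → ℝ) (p : Vec4) :
    grad (planeWaveSum c κ β) p
      = -∑ i, (c i * Real.sin (κ i ⬝ᵥ p + β i)) • κ i := by
  ext a
  simp only [grad, pd_planeWaveSum, planeWaveSum, ← add_assoc, Real.cos_add_pi_div_two,
    Pi.neg_apply, Finset.sum_apply, Pi.smul_apply, smul_eq_mul, ← Finset.sum_neg_distrib]
  exact Finset.sum_congr rfl fun i _ => by ring

lemma solvesKG_planeWaveSum {κ : ι → Vec4} {m : ℝ} (hκ : ∀ i, mink (κ i) (κ i) = m ^ 2)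
    (c β : ι → ℝ) : SolvesKG (planeWaveSum c κ β) m := by
  intro p
  simp only [pd_planeWaveSum, planeWaveSum, ← add_assoc, Real.cos_add_pi_div_two,
    Real.sin_add_pi_div_two, ← Finset.sum_sub_distrib, Finset.mul_sum, ← Finset.sum_add_distrib]
  refine Finset.sum_eq_zero fun i _ => ?_
  rw [← hκ i, mink]
  ring

lemma kgT_planeWaveSum_mem_kgC {κ : ι → Vec4} {m : ℝ} (hm : 0 < m)
    (hκ : ∀ i, mink (κ i) (κ i) = m ^ 2) (c β : ι → ℝ) : kgT (planeWaveSum c κ β) m ∈ kgC :=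
  ⟨_, m, hm, contDiff_planeWaveSum c κ β, solvesKG_planeWaveSum hκ c β, rfl⟩

lemma minner_kgT_planeWaveSum_add (c : ι → ℝ) (κ : ι → Vec4) (β : ι → ℝ) (m : ℝ) (p : Vec4)
    (X : Mat4) :
    minner (kgT (planeWaveSum c κ β) m p) X
        + minner (kgT (planeWaveSum c κ fun i => β i - π / 2) m p) X
      = ∑ i, ∑ j, c i * c j * Real.cos ((κ i ⬝ᵥ p + β i) - (κ j ⬝ᵥ p + β j))
          * kgForm X (m ^ 2) (κ i) (κ j) := by
  simp only [minner_kgT, grad_planeWaveSum, planeWaveSum, kgForm_neg_neg, ← add_sub_assoc,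
    Real.cos_sub_pi_div_two, Real.sin_sub_pi_div_two, mul_neg, neg_smul, Finset.sum_neg_distrib,
    kgForm_sum_add_kgForm_sum]
  refine Finset.sum_congr rfl fun i _ => Finset.sum_congr rfl fun j _ => ?_
  rw [Real.cos_sub]
  ring

end PlaneWaves

section Semiclassical

variable {ι : Type*} [Fintype ι] {x : Vec4 → Mat4}

lemma integrable_minner_kgT {φ : Vec4 → ℝ} (hφ : ContDiff ℝ 1 φ) (m : ℝ) (hx : Continuous x)
    (hc : HasCompactSupport x) : Integrable fun p => minner (kgT φ m p) (x p) := by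
  have hgrad : Continuous (grad φ) := continuous_pi fun a =>
    (hφ.continuous_fderiv (by simp)).clm_apply continuous_const
  simp only [minner_kgT]
  refine (continuous_kgForm hx (by fun_prop) hgrad hgrad).integrable_of_hasCompactSupport ?_
  exact hc.mono fun p hp hxp => hp (by simp [kgForm, hxp])

/-- The integrated pairing with `x` of the phase-averaged stress-energy of unit plane waves of
squared mass `τ`. The covectors `k` entering the amplitudes and `q` entering the phases are kept
apart because only the former are rescaled in the semiclassical limit. -/
def interferenceEnergy (x : Vec4 → Mat4) (β : ι → ℝ) (τ : ℝ) (k q : ι → Vec4) : ℝ :=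
  ∫ p, ∑ i, ∑ j, Real.cos ((q i ⬝ᵥ p + β i) - (q j ⬝ᵥ p + β j)) * kgForm (x p) τ (k i) (k j)

lemma exists_mem_kgC_of_interferenceEnergy_pos (hx : Continuous x) (hc : HasCompactSupport x)
    {κ : ι → Vec4} {m : ℝ} (hm : 0 < m) (hκ : ∀ i, mink (κ i) (κ i) = m ^ 2) {β : ι → ℝ}
    (hpos : 0 < interferenceEnergy x β (m ^ 2) κ κ) :
    ∃ T ∈ kgC, 0 < ∫ p, minner (T p) (x p) := by
  have hsum : interferenceEnergy x β (m ^ 2) κ κ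
      = (∫ p, minner (kgT (planeWaveSum 1 κ β) m p) (x p))
        + ∫ p, minner (kgT (planeWaveSum 1 κ fun i => β i - π / 2) m p) (x p) := by
    rw [← integral_add (integrable_minner_kgT (contDiff_planeWaveSum _ _ _) m hx hc)
      (integrable_minner_kgT (contDiff_planeWaveSum _ _ _) m hx hc)]
    simp only [minner_kgT_planeWaveSum_add, interferenceEnergy, Pi.one_apply, one_mul]
  by_contra! hnonpos
  linarith [hnonpos _ (kgT_planeWaveSum_mem_kgC hm hκ 1 β),
    hnonpos _ (kgT_planeWaveSum_mem_kgC hm hκ 1 fun i => β i - π / 2)]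

lemma continuous_interferenceEnergy (hx : Continuous x) (hc : HasCompactSupport x) (β : ι → ℝ) :
    Continuous fun P : ℝ × (ι → Vec4) × (ι → Vec4) =>
      interferenceEnergy x β P.1 P.2.1 P.2.2 := by
  refine continuousOn_univ.1 (continuousOn_integral_of_compact_support hc.isCompact
    (Continuous.continuousOn ?_) fun P p _ hp => ?_)
  · refine continuous_finsetSum _ fun i _ => continuous_finsetSum _ fun j _ =>
      Continuous.mul (by fun_prop) (continuous_kgForm ?_ ?_ ?_ ?_) <;> fun_prop
  · simp [kgForm, image_eq_zero_of_notMem_tsupport hp]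

lemma interferenceEnergy_const (x : Vec4 → Mat4) (β : ι → ℝ) (v : Vec4) (q : ι → Vec4) :
    interferenceEnergy x β (mink v v) (fun _ => v) q
      = ∫ p, intensity (fun i => q i ⬝ᵥ p + β i) * (v ⬝ᵥ x p *ᵥ v) := by
  simp only [interferenceEnergy, kgForm_mink, intensity_eq_sum_cos, Finset.sum_mul]

lemma interferenceEnergy_inv_smul (x : Vec4 → Mat4) (β : ι → ℝ) (τ : ℝ) (v : Vec4)
    (r : ι → Vec4) {ε : ℝ} (hε : ε ≠ 0) :
    interferenceEnergy x β (ε⁻¹ ^ 2 * τ) (fun i => ε⁻¹ • (v + ε • r i))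
        (fun i => ε⁻¹ • (v + ε • r i))
      = ε⁻¹ ^ 2 * interferenceEnergy x β τ (fun i => v + ε • r i) r := by
  simp only [interferenceEnergy, kgForm_smul_smul, ← integral_const_mul, Finset.mul_sum]
  have hphase : ∀ i j p, (ε⁻¹ • (v + ε • r i) ⬝ᵥ p + β i) - (ε⁻¹ • (v + ε • r j) ⬝ᵥ p + β j)
      = (r i ⬝ᵥ p + β i) - (r j ⬝ᵥ p + β j) := fun i j p => by
    simp only [smul_add, inv_smul_smul₀ hε, add_dotProduct]
    ring
  simp only [hphase, mul_left_comm]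

lemma exists_mink_eq_zero_dotProduct_pos {u : Vec4} (hu0 : 0 < u 0) :
    ∃ w : Vec4, mink w w = 0 ∧ 0 < u ⬝ᵥ w := by
  rcases le_total 0 (u 3) with h | h
  · refine ⟨![1, 0, 0, 1], by simp [mink], ?_⟩
    simpa [dotProduct, Fin.sum_univ_four] using add_pos_of_pos_of_nonneg hu0 h
  · refine ⟨![1, 0, 0, -1], by simp [mink], ?_⟩
    simpa [dotProduct, Fin.sum_univ_four] using h.trans_lt hu0

/-- The dispersion relation is restored by moving `Q` along a null covector `w`: it is then affine,
rather than quadratic, in the displacement. -/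
lemma exists_tendsto_mink_add_smul_eq {u Q : Vec4} (hu0 : 0 < u 0) (hQ : u ⬝ᵥ Q = 0) (s : ℝ) :
    ∃ r : ℝ → Vec4, Tendsto r (𝓝 0) (𝓝 Q) ∧
      ∀ᶠ ε in 𝓝 0, mink (E *ᵥ u + ε • r ε) (E *ᵥ u + ε • r ε) = mink u u + ε ^ 2 * s := by
  obtain ⟨w, hw, huw⟩ := exists_mink_eq_zero_dotProduct_pos hu0
  set d : ℝ → ℝ := fun ε => 2 * (u ⬝ᵥ w + ε * mink Q w)
  have hd : Tendsto d (𝓝 0) (𝓝 (2 * (u ⬝ᵥ w))) :=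
    Continuous.tendsto' (by fun_prop) _ _ (by simp [d])
  set c : ℝ → ℝ := fun ε => ε * (s - mink Q Q) / d ε
  have hc : Tendsto c (𝓝 0) (𝓝 0) := by
    have hnum : Tendsto (fun ε : ℝ => ε * (s - mink Q Q)) (𝓝 0) (𝓝 0) :=
      Continuous.tendsto' (by fun_prop) _ _ (by simp)
    have hdiv := hnum.div hd (by positivity)
    rwa [zero_div] at hdiv
  refine ⟨fun ε => Q + c ε • w, by simpa using tendsto_const_nhds.add (hc.smul_const w), ?_⟩
  filter_upwards [hd.eventually_const_lt (by positivity : 0 < 2 * (u ⬝ᵥ w))] with ε hε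
  have hexpand : mink (E *ᵥ u + ε • (Q + c ε • w)) (E *ᵥ u + ε • (Q + c ε • w))
      = mink (E *ᵥ u) (E *ᵥ u) + 2 * ε * mink (E *ᵥ u) Q + ε ^ 2 * mink Q Q
        + ε * c ε * (2 * (mink (E *ᵥ u) w + ε * mink Q w)) + (ε * c ε) ^ 2 * mink w w := by
    simp only [mink, Pi.add_apply, Pi.smul_apply, smul_eq_mul]
    ring
  have hcd : c ε * (2 * (u ⬝ᵥ w + ε * mink Q w)) = ε * (s - mink Q Q) :=
    div_mul_cancel₀ _ hε.ne'
  rw [hexpand, mink_E_mulVec_E_mulVec, mink_E_mulVec_left, mink_E_mulVec_left, hQ, hw, mul_assoc ε,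
    hcd]
  ring

lemma exists_mem_kgC_of_integral_intensity_mul_pos (hx : Continuous x) (hc : HasCompactSupport x)
    {u : Vec4} (hu : 0 ≤ mink u u) (hu0 : 0 < u 0) {Q : ι → Vec4} (hQ : ∀ i, u ⬝ᵥ Q i = 0)
    {β : ι → ℝ}
    (hpos : 0 < ∫ p, intensity (fun i => Q i ⬝ᵥ p + β i) * (E *ᵥ u ⬝ᵥ x p *ᵥ (E *ᵥ u))) :
    ∃ T ∈ kgC, 0 < ∫ p, minner (T p) (x p) := by
  choose r hr hmink using fun i => exists_tendsto_mink_add_smul_eq hu0 (hQ i) 1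
  set τ : ℝ → ℝ := fun ε => mink u u + ε ^ 2 * 1
  set k : ℝ → ι → Vec4 := fun ε i => E *ᵥ u + ε • r i ε
  have hτ : Tendsto τ (𝓝 0) (𝓝 (mink u u)) := Continuous.tendsto' (by fun_prop) _ _ (by simp [τ])
  have hk : Tendsto k (𝓝 0) (𝓝 fun _ => E *ᵥ u) := tendsto_pi_nhds.2 fun i => by
    simpa using tendsto_const_nhds.add (tendsto_id.smul (hr i))
  have hlim := ((continuous_interferenceEnergy hx hc β).tendsto
    (mink u u, (fun _ => E *ᵥ u), Q)).comp (hτ.prodMk_nhds (hk.prodMk_nhds (tendsto_pi_nhds.2 hr)))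
  rw [← interferenceEnergy_const, mink_E_mulVec_E_mulVec] at hpos
  obtain ⟨ε, ⟨henergy, hdisp⟩, hε⟩ := (((hlim.eventually_const_lt hpos).and
    (eventually_all.2 hmink)).filter_mono nhdsWithin_le_nhds |>.and
      (self_mem_nhdsWithin : Set.Ioi (0 : ℝ) ∈ 𝓝[>] 0)).exists
  replace hε : 0 < ε := hε
  have hτpos : 0 < ε⁻¹ ^ 2 * τ ε := by positivity
  have hm : √(ε⁻¹ ^ 2 * τ ε) ^ 2 = ε⁻¹ ^ 2 * τ ε := Real.sq_sqrt hτpos.le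
  refine exists_mem_kgC_of_interferenceEnergy_pos hx hc (κ := fun i => ε⁻¹ • k ε i) (β := β)
    (Real.sqrt_pos.2 hτpos) (fun i => ?_) ?_
  · rw [hm, show τ ε = mink (k ε i) (k ε i) from (hdisp i).symm]
    simp only [mink, k, Pi.smul_apply, smul_eq_mul]
    ring
  · rw [hm, interferenceEnergy_inv_smul x β (τ ε) (E *ᵥ u) (fun i => r i ε) hε.ne']
    exact mul_pos (by positivity) henergy

end Semiclassical

section Transverse

/-- The covectors `u₀ dyᵢ - uᵢ dy₀`, whose common kernel is the line spanned by `u`. -/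
def transverse (u : Vec4) (i : Fin 4) : Vec4 := u 0 • Pi.single i 1 - u i • Pi.single 0 1

lemma transverse_dotProduct (u : Vec4) (i : Fin 4) (y : Vec4) :
    transverse u i ⬝ᵥ y = u 0 * y i - u i * y 0 := by
  simp [transverse, sub_dotProduct, smul_dotProduct]

lemma dotProduct_transverse_self (u : Vec4) (i : Fin 4) : u ⬝ᵥ transverse u i = 0 := by
  rw [dotProduct_comm, transverse_dotProduct]
  ring

lemma mem_range_line_of_transverse_dotProduct_eq_zero {u p q : Vec4} (hu0 : u 0 ≠ 0)
    (h : ∀ i, transverse u i ⬝ᵥ (q - p) = 0) : q ∈ Set.range fun t : ℝ => p + t • u := by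
  refine ⟨(q - p) 0 / u 0, funext fun i => ?_⟩
  have hi := h i
  rw [transverse_dotProduct] at hi
  simp only [Pi.add_apply, Pi.smul_apply, smul_eq_mul, Pi.sub_apply] at hi ⊢
  field_simp
  linarith

end Transverse

lemma exists_pos_forall_norm_smul_lt {X V : Type*} [TopologicalSpace X] [SeminormedAddCommGroup V]
    [NormedSpace ℝ V] {K : Set X} (hK : IsCompact K) {F : X → V} (hF : ContinuousOn F K) {C : ℝ}
    (hC : 0 < C) : ∃ δ : ℝ, 0 < δ ∧ ∀ p ∈ K, ‖δ • F p‖ < C := by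
  obtain ⟨R, hR, hFR⟩ := (hK.image_of_continuousOn hF).isBounded.exists_pos_norm_lt
  refine ⟨C / R, by positivity, fun p hp => ?_⟩
  calc ‖(C / R) • F p‖ = C / R * ‖F p‖ := by rw [norm_smul, Real.norm_of_nonneg (by positivity)]
    _ < C / R * R := by gcongr; exact hFR _ (Set.mem_image_of_mem F hp)
    _ = C := div_mul_cancel₀ C hR.ne'

lemma exists_intensity_peak {u : Vec4} (hu0 : u 0 ≠ 0) (p : Vec4) {K : Set Vec4}
    (hK : IsCompact K) :
    ∃ (Q : Fin 4 → Vec4) (β : Fin 4 → ℝ), (∀ i, u ⬝ᵥ Q i = 0) ∧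
      (∀ t : ℝ, intensity (fun i => Q i ⬝ᵥ (p + t • u) + β i) = intensity (0 : Fin 4 → ℝ)) ∧
      ∀ q ∈ K, (q ∉ Set.range fun t : ℝ => p + t • u) →
        intensity (fun i => Q i ⬝ᵥ q + β i) < intensity (0 : Fin 4 → ℝ) := by
  obtain ⟨δ, hδ, hsmall⟩ := exists_pos_forall_norm_smul_lt hK (C := 2 * π)
    (F := fun q i => transverse u i ⬝ᵥ (q - p)) (by fun_prop) (by positivity)
  have hphase : ∀ q i, (δ • transverse u i) ⬝ᵥ q + -(δ • transverse u i ⬝ᵥ p)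
      = δ * (transverse u i ⬝ᵥ (q - p)) := fun q i => by
    simp only [smul_dotProduct, dotProduct_sub, smul_eq_mul]
    ring
  refine ⟨fun i => δ • transverse u i, fun i => -(δ • transverse u i ⬝ᵥ p),
    fun i => by rw [dotProduct_smul, dotProduct_transverse_self, smul_zero], fun t => ?_,
    fun q hq hline => ?_⟩
  · simp only [hphase, add_sub_cancel_left, dotProduct_smul, dotProduct_comm _ u,
      dotProduct_transverse_self, smul_zero, mul_zero]
    rfl
  · simp only [hphase]
    obtain ⟨i, hi⟩ : ∃ i, transverse u i ⬝ᵥ (q - p) ≠ 0 := by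
      contrapose! hline
      exact mem_range_line_of_transverse_dotProduct_eq_zero hu0 hline
    have h0 : transverse u 0 ⬝ᵥ (q - p) = 0 := by rw [transverse_dotProduct, sub_self]
    refine intensity_lt_intensity_zero (i := i) (j := 0) ?_ ?_ <;> rw [h0, mul_zero]
    · exact mul_ne_zero hδ.ne' hi
    · rw [sub_zero]
      exact (norm_le_pi_norm (δ • fun i => transverse u i ⬝ᵥ (q - p)) i).trans_lt (hsmall q hq)

theorem kg_tracks_timelike_and_null_geodesics_general (p : Vec4) {u : Vec4} (hu : 0 ≤ mink u u)
    (hu0 : 0 < u 0) {x : Vec4 → Mat4} (hx : Continuous x) (hc : HasCompactSupport x)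
    {O : Set Vec4} (hO : IsOpen O) (hγO : (Set.range fun t : ℝ => p + t • u) ⊆ O)
    (hxO : ∀ q ∈ O, 0 ≤ E *ᵥ u ⬝ᵥ x q *ᵥ (E *ᵥ u)) {t₀ : ℝ}
    (ht₀ : 0 < E *ᵥ u ⬝ᵥ x (p + t₀ • u) *ᵥ (E *ᵥ u)) :
    ∃ T ∈ kgC, 0 < ∫ q, minner (T q) (x q) := by
  set h : Vec4 → ℝ := fun q => E *ᵥ u ⬝ᵥ x q *ᵥ (E *ᵥ u)
  have hsupp : Function.support h ⊆ Function.support x := fun q hq hxq => hq (by simp [h, hxq])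
  obtain ⟨Q, β, hQ, hline, hoff⟩ := exists_intensity_peak hu0.ne' p hc.isCompact
  obtain ⟨N, hN⟩ := (eventually_integral_pow_mul_pos (μ := volume) (h := h)
    (continuous_intensity.comp (f := fun q i => Q i ⬝ᵥ q + β i) (by fun_prop))
    (fun q => intensity_nonneg _) (by fun_prop) (hc.mono hsupp) hO hxO (hγO ⟨t₀, rfl⟩) ht₀
    (by rw [Function.comp_apply, hline, intensity_zero]; norm_num)
    fun q hq => by
      rw [Function.comp_apply, Function.comp_apply, hline]
      exact hoff q (closure_mono hsupp hq.1) fun hqγ => hq.2 (hγO hqγ)).exists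
  refine exists_mem_kgC_of_integral_intensity_mul_pos hx hc hu hu0
    (Q := fun f : Fin N → Fin 4 => ∑ k, Q (f k)) (β := fun f => ∑ k, β (f k))
    (fun f => by simp [dotProduct_sum, hQ]) ?_
  simpa only [Function.comp_apply, intensity_pow, Finset.sum_add_distrib, sum_dotProduct] using hN

lemma UnitTimelike.futureCausal {u : Vec4} (hu : UnitTimelike u) : FutureCausal u :=
  ⟨hu.1.1.le, hu.1.2.le⟩

lemma FutureNull.futureCausal {u : Vec4} (hu : FutureNull u) : FutureCausal u :=
  ⟨hu.2.1.ge, hu.2.2.le⟩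

/-- Klein–Gordon fields of all positive masses track all timelike and
null geodesics. -/
theorem kg_tracks_timelike_and_null_geodesics (p : Vec4) (u : Vec4)
    (hu : UnitTimelike u ∨ FutureNull u) :
    Tracks kgC (fun t => p + t • u) := by
  have hcausal : FutureCausal u := hu.elim UnitTimelike.futureCausal FutureNull.futureCausal
  have hu0 : 0 < u 0 := hu.elim (fun h => h.1.2) fun h => h.2.2
  rintro x hsmooth hc - ⟨O, hO, hγO, hxO⟩ ⟨t₀, ht₀⟩
  exact kg_tracks_timelike_and_null_geodesics_general p hcausal.1 hu0
    (continuous_matrix fun a b => (hsmooth a b).continuous) hc hO hγO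
    (fun q hq => hcausal.dotProduct_mulVec_nonneg (hxO q hq))
    (ht₀.dotProduct_mulVec_pos_s19 hcausal fun h => hu0.ne' (congrFun h 0))
end
end
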